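/- arXiv:2309.07148 — 3 statements merged into one kernel-verified Lean document; each statement's English description precedes it below -/
import Mathlib

section
/- Titchmarsh's convolution theorem: if f, g ∈ L¹[a,b] satisfy (f*g)(t) = 0 for almost every t ∈ [a,b], then there exist λ, μ ≥ 0 with λ + μ ≥ b − a such that f ≡ 0 almost everywhere on [a, a+λ] and g ≡ 0 almost everywhere on [a, a+μ]. -/
open MeasureTheory Set

lemma bdd_mul_int (h φ : ℝ → ℝ) (hi : Integrable h) (hφ : Measurable φ) (B : ℝ)
    (hB : ∀ᵐ u, h u ≠ 0 → |φ u| ≤ B) : Integrable (fun u => φ u * h u) := by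
  refine Integrable.mono' (hi.norm.const_mul B) (hφ.aestronglyMeasurable.mul hi.1) ?_
  filter_upwards [hB] with u hu
  rw [norm_mul]
  by_cases h0 : h u = 0
  · simp [h0]
  · exact mul_le_mul_of_nonneg_right (hu h0) (norm_nonneg _)

lemma phrag_hasSum (h : ℝ → ℝ) (hi : Integrable h) (φ : ℝ → ℝ) (hφ : Measurable φ) (B : ℝ)
    (hB : ∀ᵐ u, h u ≠ 0 → |φ u| ≤ B) :
    HasSum (fun k : ℕ => ∫ u, φ u ^ k / k.factorial * h u) (∫ u, Real.exp (φ u) * h u) := by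
  have hb : ∀ k : ℕ, ∀ᵐ u, h u ≠ 0 → |φ u ^ k / k.factorial| ≤ B ^ k / k.factorial := by
    intro k
    filter_upwards [hB] with u hu h0
    rw [abs_div, abs_pow, Nat.abs_cast]
    have := hu h0
    gcongr
  have hint : ∀ k : ℕ, Integrable (fun u => φ u ^ k / k.factorial * h u) := fun k =>
    bdd_mul_int h _ hi (by fun_prop) _ (hb k)
  have := hasSum_integral_of_summable_integral_norm (μ := volume) hint ?_
  · have e : ∀ u, Real.exp (φ u) * h u = ∑' k : ℕ, φ u ^ k / k.factorial * h u := fun u => by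
      rw [tsum_mul_right, Real.exp_eq_exp_ℝ, NormedSpace.exp_eq_tsum_div]
    simp_rw [e]
    exact this
  · refine Summable.of_nonneg_of_le (fun k => integral_nonneg fun u => norm_nonneg _) (fun k => ?_)
      ((Real.summable_pow_div_factorial B).mul_right (∫ u, ‖h u‖))
    rw [← integral_const_mul]
    refine integral_mono_ae (hint k).norm (hi.norm.const_mul _) ?_
    filter_upwards [hb k] with u hu
    simp only [norm_mul]
    by_cases h0 : h u = 0
    · simp [h0]
    · exact mul_le_mul_of_nonneg_right (hu h0) (norm_nonneg _)

lemma phrag_bound (h : ℝ → ℝ) (hi : Integrable h) (c : ℝ) (hc : ∀ᵐ u, c < u → h u = 0)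
    (M : ℝ) (hM : ∀ n : ℕ, |∫ u, Real.exp (n * u) * h u| ≤ M) (s : ℝ) (n : ℕ) :
    |(∫ u, Real.exp (-Real.exp (n * (u - s))) * h u) - ∫ u, h u|
      ≤ (Real.exp (Real.exp (-(n * s))) - 1) * M := by
  have h1 := phrag_hasSum h hi (fun u => -Real.exp (n * (u - s))) (by fun_prop)
    (Real.exp (n * (c - s))) (by
      filter_upwards [hc] with u hu h0
      rw [abs_neg, Real.abs_exp]
      have : u ≤ c := not_lt.1 fun h => h0 (hu h)
      gcongr)
  have h2 := (hasSum_nat_add_iff' 1).2 h1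
  have h3 : HasSum (fun k : ℕ => Real.exp (-(n * s)) ^ k / k.factorial) (Real.exp (Real.exp (-(n * s)))) := by
    have := NormedSpace.expSeries_div_hasSum_exp (𝔸 := ℝ) (Real.exp (-(n * s)))
    rwa [← Real.exp_eq_exp_ℝ] at this
  have h4 := ((hasSum_nat_add_iff' 1).2 h3).mul_right M
  simp only [Finset.range_one, Finset.sum_singleton, pow_zero, Nat.factorial_zero, Nat.cast_one,
    div_one, one_mul] at h2 h4
  refine HasSum.norm_le_of_bounded h2 h4 fun k => ?_
  have : ∀ u, (-Real.exp (n * (u - s))) ^ (k+1) / (k+1).factorial * h u =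
      ((-1) ^ (k+1) * (Real.exp (-(n * s)) ^ (k+1) / (k+1).factorial)) * (Real.exp (((k+1) * n : ℕ) * u) * h u) := by
    intro u
    have : Real.exp (n * (u - s)) ^ (k+1) = Real.exp (-(n * s)) ^ (k+1) * Real.exp (((k+1) * n : ℕ) * u) := by
      rw [← Real.exp_nat_mul, ← Real.exp_nat_mul, ← Real.exp_add]
      congr 1; push_cast; ring
    rw [neg_pow, this]; ring
  simp_rw [this]
  rw [integral_const_mul, norm_mul, norm_mul, norm_pow, norm_neg, norm_one, one_pow, one_mul,
    Real.norm_of_nonneg (by positivity)]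
  exact mul_le_mul_of_nonneg_left (hM _) (by positivity)

lemma phrag_lim (h : ℝ → ℝ) (hi : Integrable h) (c : ℝ) (hc : ∀ᵐ u, c < u → h u = 0)
    (M : ℝ) (hM : ∀ n : ℕ, |∫ u, Real.exp (n * u) * h u| ≤ M) (s : ℝ) (hs : 0 < s) :
    ∫ u in Iio s, h u = ∫ u, h u := by
  have hns : Filter.Tendsto (fun n : ℕ => (n : ℝ) * s) Filter.atTop Filter.atTop :=
    tendsto_natCast_atTop_atTop.atTop_mul_const hs
  have t1 : Filter.Tendsto (fun n : ℕ => (Real.exp (Real.exp (-(n * s))) - 1) * M) Filter.atTop (nhds 0) := by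
    have a1 : Filter.Tendsto (fun n : ℕ => Real.exp (-(n * s))) Filter.atTop (nhds 0) :=
      Real.tendsto_exp_neg_atTop_nhds_zero.comp hns
    have a2 := (((Real.continuous_exp.tendsto 0).comp a1).sub_const 1).mul_const M
    simpa [Function.comp_def] using a2
  have t2 : Filter.Tendsto (fun n : ℕ => (∫ u, Real.exp (-Real.exp (n * (u - s))) * h u) - ∫ u, h u)
      Filter.atTop (nhds 0) :=
    squeeze_zero_norm (fun n => phrag_bound h hi c hc M hM s n) t1
  have t3 : Filter.Tendsto (fun n : ℕ => (∫ u, Real.exp (-Real.exp (n * (u - s))) * h u))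
      Filter.atTop (nhds (∫ u, (Iio s).indicator h u)) := by
    refine tendsto_integral_of_dominated_convergence (fun u => ‖h u‖) (fun n => ?_) hi.norm (fun n => ?_) ?_
    · exact (by fun_prop : Measurable fun u : ℝ => Real.exp (-Real.exp (n * (u - s)))).aestronglyMeasurable.mul hi.1
    · refine Filter.Eventually.of_forall fun u => ?_
      rw [norm_mul, Real.norm_of_nonneg (by positivity)]
      refine mul_le_of_le_one_left (norm_nonneg _) ?_
      rw [Real.exp_le_one_iff]; linarith [Real.exp_pos (n * (u - s))]
    · have : ∀ᵐ u : ℝ, u ≠ s := by simp [ae_iff]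
      filter_upwards [this] with u hu
      rcases lt_or_gt_of_ne hu with hu | hu
      · rw [indicator_of_mem (by exact hu)]
        have b1 : Filter.Tendsto (fun n : ℕ => (n : ℝ) * (s - u)) Filter.atTop Filter.atTop :=
          tendsto_natCast_atTop_atTop.atTop_mul_const (by linarith)
        have b2 := Real.tendsto_exp_neg_atTop_nhds_zero.comp b1
        have b3 := ((Real.continuous_exp.tendsto _).comp b2.neg).mul_const (h u)
        simp only [neg_zero, Real.exp_zero, one_mul] at b3
        refine b3.congr fun n => ?_
        simp only [Function.comp]
        rw [show -((n:ℝ) * (s - u)) = n * (u - s) by ring]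
      · rw [indicator_of_notMem (by simp [hu.le])]
        have b1 : Filter.Tendsto (fun n : ℕ => (n : ℝ) * (u - s)) Filter.atTop Filter.atTop :=
          tendsto_natCast_atTop_atTop.atTop_mul_const (by linarith)
        have b2 := (Real.tendsto_exp_neg_atTop_nhds_zero.comp (Real.tendsto_exp_atTop.comp b1)).mul_const (h u)
        simpa [Function.comp_def] using b2
  have t4 := tendsto_nhds_unique t2 (t3.sub_const _)
  rw [integral_indicator measurableSet_Iio] at t4
  linarith

lemma phrag (h : ℝ → ℝ) (hi : Integrable h) (c : ℝ) (hc : ∀ᵐ u, c < u → h u = 0)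
    (M : ℝ) (hM : ∀ n : ℕ, |∫ u, Real.exp (n * u) * h u| ≤ M) : ∀ᵐ u, 0 < u → h u = 0 := by
  have key : ∀ s, 0 < s → ∫ u in Iic s, h u = ∫ u, h u := fun s hs => by
    rw [integral_Iic_eq_integral_Iio]; exact phrag_lim h hi c hc M hM s hs
  filter_upwards [LocallyIntegrable.ae_hasDerivAt_integral hi.locallyIntegrable] with u hu hu0
  have d := hu u
  have : (fun x => ∫ y in u..x, h y) =ᶠ[nhds u] fun _ => 0 := by
    filter_upwards [lt_mem_nhds hu0] with x hx
    rw [← intervalIntegral.integral_Iic_sub_Iic hi.integrableOn hi.integrableOn, key _ hx, key _ hu0, sub_self]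
  exact (d.congr_of_eventuallyEq this.symm).unique (hasDerivAt_const u (0:ℝ))

noncomputable def cv (f g : ℝ → ℝ) : ℝ → ℝ :=
  convolution f g (ContinuousLinearMap.mul ℝ ℝ) volume

lemma cv_apply (f g : ℝ → ℝ) (x : ℝ) : cv f g x = ∫ t, f t * g (x - t) := rfl

lemma cv_swap (f g : ℝ → ℝ) (x : ℝ) : cv f g x = ∫ t, f (x - t) * g t := convolution_mul_swap

lemma cv_comm (f g : ℝ → ℝ) : cv f g = cv g f := by
  ext x; rw [cv_swap, cv_apply]; simp_rw [mul_comm]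

lemma cv_int {f g : ℝ → ℝ} (hf : Integrable f) (hg : Integrable g) : Integrable (cv f g) :=
  hf.integrable_convolution _ hg

lemma cv_ex {f g : ℝ → ℝ} (hf : Integrable f) (hg : Integrable g) :
    ∀ᵐ x, Integrable (fun t => f t * g (x - t)) :=
  hf.ae_convolution_exists (ContinuousLinearMap.mul ℝ ℝ) hg

lemma cv_congr {f f' g g' : ℝ → ℝ} (hf : f =ᵐ[volume] f') (hg : g =ᵐ[volume] g') :
    cv f g = cv f' g' := convolution_congr _ hf hg

lemma cv_assoc {f g k : ℝ → ℝ} (hf : Integrable f) (hg : Integrable g) (hk : Integrable k) :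
    cv (cv f g) k =ᵐ[volume] cv f (cv g k) := by
  have h := hf.norm.ae_convolution_exists (ContinuousLinearMap.mul ℝ ℝ)
    (hg.norm.integrable_convolution (ContinuousLinearMap.mul ℝ ℝ) hk.norm)
  filter_upwards [h] with x hx
  exact convolution_assoc _ _ _ _ (fun x y z => by simp [mul_assoc]) hf.1 hg.1 hk.1
    (hf.ae_convolution_exists _ hg) (hg.norm.ae_convolution_exists _ hk.norm) hx

lemma cv_rearr {a b c d : ℝ → ℝ} (ha : Integrable a) (hb : Integrable b) (hc : Integrable c)
    (hd : Integrable d) : cv (cv a b) (cv c d) =ᵐ[volume] cv (cv c b) (cv a d) := by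
  have h1 : cv (cv a b) (cv c d) =ᵐ[volume] cv a (cv b (cv c d)) := cv_assoc ha hb (cv_int hc hd)
  have h2 : cv a (cv b (cv c d)) = cv a (cv (cv c b) d) := by
    rw [cv_comm c b]
    exact cv_congr (Filter.EventuallyEq.refl _ _) (cv_assoc hb hc hd).symm
  have h3 : cv (cv a (cv c b)) d =ᵐ[volume] cv a (cv (cv c b) d) := cv_assoc ha (cv_int hc hb) hd
  have h4 : cv (cv (cv c b) a) d =ᵐ[volume] cv (cv c b) (cv a d) := cv_assoc (cv_int hc hb) ha hd
  rw [cv_comm (cv c b) a] at h4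
  rw [h2] at h1
  exact h1.trans (h3.symm.trans h4)

lemma cv_sub {f f' g : ℝ → ℝ} (hf : Integrable f) (hf' : Integrable f') (hg : Integrable g) :
    cv (f - f') g =ᵐ[volume] cv f g - cv f' g := by
  filter_upwards [cv_ex hf hg, cv_ex hf' hg] with x h1 h2
  simp only [cv_apply, Pi.sub_apply, sub_mul]
  exact integral_sub h1 h2

def Van (u : ℝ → ℝ) (x : ℝ) : Prop := ∀ᵐ t, t < x → u t = 0

lemma Van.mono {u : ℝ → ℝ} {x y : ℝ} (h : Van u x) (hy : y ≤ x) : Van u y := by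
  filter_upwards [h] with t ht h2 using ht (h2.trans_le hy)

lemma Van.congr {u v : ℝ → ℝ} {x : ℝ} (h : Van u x) (hv : u =ᵐ[volume] v) : Van v x := by
  filter_upwards [h, hv] with t ht h2 h3
  rw [← h2, ht h3]

lemma ae_sub_left {p : ℝ → Prop} (h : ∀ᵐ t : ℝ, p t) (c : ℝ) : ∀ᵐ t : ℝ, p (c - t) :=
  (Measure.measurePreserving_sub_left (volume : Measure ℝ) c).quasiMeasurePreserving.ae h

lemma Van.cv {u v : ℝ → ℝ} {x y : ℝ} (hu : Van u x) (hv : Van v y) : Van (cv u v) (x + y) := by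
  refine Filter.Eventually.of_forall fun z hz => ?_
  rw [cv_apply]
  refine integral_eq_zero_of_ae ?_
  filter_upwards [hu, ae_sub_left hv z] with t h1 h2
  rcases lt_or_ge t x with h | h
  · simp [h1 h]
  · simp [h2 (by linarith)]

lemma sq_case {H : ℝ → ℝ} (hH : Integrable H) (h0 : Van H 0) {c : ℝ} (hc : Van (cv H H) (2 * c)) :
    Van H c := by
  have key := phrag (fun u => H (c - u)) (hH.comp_sub_left c) c (by
      filter_upwards [ae_sub_left h0 c] with u hu h
      exact hu (by linarith)) (√(∫ t, ‖cv H H t‖)) ?_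
  · have := ae_sub_left key c
    filter_upwards [this] with t ht h
    simpa using ht (by linarith)
  intro n
  let K : ℝ → ℝ := fun t => Real.exp (n * (c - t)) * H t
  have hK : Integrable K := bdd_mul_int H _ hH (by fun_prop) (Real.exp (n * c)) (by
    filter_upwards [h0] with t ht h
    rw [Real.abs_exp]
    have : 0 ≤ t := not_lt.1 fun h' => h (ht h')
    gcongr
    linarith)
  have e1 : ∫ u, Real.exp (n * u) * H (c - u) = ∫ t, K t := by
    rw [← integral_sub_left_eq_self K volume c]
    simp [K]
  have e2 : ∀ z, cv K K z = Real.exp (n * (2 * c - z)) * cv H H z := by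
    intro z
    rw [cv_apply, cv_apply, ← integral_const_mul]
    congr 1 with t
    have : Real.exp (n * (2 * c - z)) = Real.exp (n * (c - t)) * Real.exp (n * (c - (z - t))) := by
      rw [← Real.exp_add]; congr 1; ring
    simp only [K]
    rw [this]; ring
  have e3 : ∫ z, cv K K z = (∫ t, K t) * ∫ t, K t :=
    integral_convolution (ContinuousLinearMap.mul ℝ ℝ) hK hK
  rw [e1]
  apply Real.abs_le_sqrt
  rw [sq, ← e3]
  refine (Real.le_norm_self _).trans ((norm_integral_le_integral_norm _).trans ?_)
  refine integral_mono_ae (cv_int hK hK).norm (cv_int hH hH).norm ?_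
  filter_upwards [hc] with z hz
  simp only [e2, norm_mul]
  rcases lt_or_ge z (2 * c) with h | h
  · simp [hz h]
  · refine mul_le_of_le_one_left (norm_nonneg _) ?_
    rw [Real.norm_of_nonneg (by positivity), Real.exp_le_one_iff]
    exact mul_nonpos_of_nonneg_of_nonpos (by positivity) (by linarith)

def Good (F : ℝ → ℝ) : Prop :=
  Measurable F ∧ Integrable F ∧ ∃ R, ∀ x, F x ≠ 0 → 0 ≤ x ∧ x ≤ R

def TT (F : ℝ → ℝ) : ℝ → ℝ := fun t => t * F t

lemma Good.tt {F : ℝ → ℝ} (h : Good F) : Good (TT F) := by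
  obtain ⟨h1, h2, R, h3⟩ := h
  refine ⟨by unfold TT; fun_prop, bdd_mul_int F (fun t => t) h2 measurable_id R ?_, R, ?_⟩
  · refine Filter.Eventually.of_forall fun x hx => ?_
    rw [abs_of_nonneg (h3 x hx).1]; exact (h3 x hx).2
  · intro x hx
    exact h3 x (fun h => hx (by simp [TT, h]))

lemma Good.van {F : ℝ → ℝ} (h : Good F) : Van F 0 := by
  obtain ⟨h1, h2, R, h3⟩ := h
  refine Filter.Eventually.of_forall fun x hx => ?_
  by_contra h
  linarith [(h3 x h).1]

lemma Good.vancv {F G : ℝ → ℝ} (h : Good F) (hG : Good G) : Van (cv F G) 0 := by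
  simpa using h.van.cv hG.van

lemma tt_cv {F G : ℝ → ℝ} (hF : Good F) (hG : Good G) :
    TT (cv F G) =ᵐ[volume] cv F (TT G) + cv (TT F) G := by
  filter_upwards [cv_ex hF.2.1 hG.tt.2.1, cv_ex hF.tt.2.1 hG.2.1] with z h1 h2
  simp only [Pi.add_apply, cv_apply, TT] at *
  rw [← integral_add h1 h2, ← integral_const_mul]
  congr 1 with t
  ring

lemma step {F G : ℝ → ℝ} (hF : Good F) (hG : Good G) {x y z : ℝ} (hx : Van (cv F G) x)
    (hy : Van (cv F (TT G)) y) (hz : Van (cv (TT F) (TT G)) z) :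
    Van (cv F (TT G)) ((x + min y z) / 2) := by
  have iB := cv_int hF.2.1 hG.tt.2.1
  have iC := cv_int hF.tt.2.1 hG.2.1
  have e := tt_cv hF hG
  have iA : Integrable (TT (cv F G)) := (iB.add iC).congr e.symm
  refine sq_case iB (hF.vancv hG.tt) ?_
  have e1 : cv F (TT G) =ᵐ[volume] TT (cv F G) - cv (TT F) G := by
    filter_upwards [e] with t ht
    simp [ht]
  have e2 : cv (cv F (TT G)) (cv F (TT G)) = cv (TT (cv F G) - cv (TT F) G) (cv F (TT G)) :=
    cv_congr e1 (Filter.EventuallyEq.refl _ _)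
  have e3 := cv_sub iA iC iB
  have e4 := cv_rearr hF.tt.2.1 hG.2.1 hF.2.1 hG.tt.2.1
  rw [e2]
  have vA : Van (TT (cv F G)) x := by
    filter_upwards [hx] with t ht h
    simp [TT, ht h]
  have v1 := (vA.cv hy).mono (y := 2 * ((x + min y z) / 2)) (by linarith [min_le_left y z])
  have v2 := (hx.cv hz).mono (y := 2 * ((x + min y z) / 2)) (by linarith [min_le_right y z])
  filter_upwards [e3, e4, v1, v2] with t h3 h4 h1 h2 ht
  rw [h3, Pi.sub_apply, h4, h1 ht, h2 ht, sub_zero]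

noncomputable def sv (X : ℝ) (u : ℝ → ℝ) : ℝ := sSup {x | 0 ≤ x ∧ x ≤ X ∧ Van u x}

lemma sv_le {X : ℝ} {u : ℝ → ℝ} (hX : 0 ≤ X) : sv X u ≤ X :=
  Real.sSup_le (fun _ h => h.2.1) hX

lemma sv_nonneg {X : ℝ} {u : ℝ → ℝ} : 0 ≤ sv X u :=
  Real.sSup_nonneg (fun _ h => h.1)

lemma le_sv {X : ℝ} {u : ℝ → ℝ} {y : ℝ} (h0 : 0 ≤ y) (h1 : y ≤ X) (h : Van u y) : y ≤ sv X u :=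
  le_csSup ⟨X, fun _ h => h.2.1⟩ ⟨h0, h1, h⟩

lemma sv_van {X : ℝ} {u : ℝ → ℝ} (hX : 0 ≤ X) (h : Van u 0) : Van u (sv X u) := by
  have hne : {x | 0 ≤ x ∧ x ≤ X ∧ Van u x}.Nonempty := ⟨0, le_rfl, hX, h⟩
  have : ∀ n : ℕ, Van u (sv X u - 1 / (n + 1)) := by
    intro n
    obtain ⟨y, hy, hlt⟩ := exists_lt_of_lt_csSup hne
      (show sv X u - 1 / (n + 1) < sSup {x | 0 ≤ x ∧ x ≤ X ∧ Van u x} by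
        have : (0:ℝ) < 1 / (n + 1) := by positivity
        unfold sv; linarith)
    exact hy.2.2.mono hlt.le
  filter_upwards [ae_all_iff.2 this] with t ht h
  obtain ⟨n, hn⟩ := exists_nat_one_div_lt (sub_pos.2 h)
  exact ht n (by linarith)

lemma drop {X : ℝ} (hX : 0 ≤ X) {F G : ℝ → ℝ} (hF : Good F) (hG : Good G)
    (h : sv X (cv F (TT G)) < sv X (cv F G)) :
    sv X (cv (TT F) (TT G)) ≤ 2 * sv X (cv F (TT G)) - sv X (cv F G) := by
  have vx := sv_van hX (hF.vancv hG)
  have vy := sv_van hX (hF.vancv hG.tt)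
  have vz := sv_van hX (hF.tt.vancv hG.tt)
  have hs := step hF hG vx vy vz
  have nx := sv_nonneg (X := X) (u := cv F G)
  have ny := sv_nonneg (X := X) (u := cv F (TT G))
  have nz := sv_nonneg (X := X) (u := cv (TT F) (TT G))
  have lx := sv_le (u := cv F G) hX
  have hm := min_le_left (sv X (cv F (TT G))) (sv X (cv (TT F) (TT G)))
  have := le_sv (X := X) (by positivity) (by linarith) hs
  rcases min_choice (sv X (cv F (TT G))) (sv X (cv (TT F) (TT G))) with hh | hh <;>
    rw [hh] at this <;> linarith

lemma drop_iter {X : ℝ} (hX : 0 ≤ X) (N : ℕ) : ∀ {F G : ℝ → ℝ} (_ : Good F) (_ : Good G)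
    (_ : sv X (cv F (TT G)) < sv X (cv F G)),
    N * (sv X (cv F G) - sv X (cv F (TT G))) ≤ sv X (cv F (TT G)) := by
  induction N with
  | zero => intro F G _ _ _; simpa using sv_nonneg
  | succ N ih =>
    intro F G hF hG h
    have hd := drop hX hF hG h
    have := ih hG.tt hF (by rw [cv_comm (TT G), cv_comm (TT G)]; linarith)
    rw [cv_comm (TT G), cv_comm (TT G)] at this
    have h2 : (N:ℝ) * (sv X (cv F G) - sv X (cv F (TT G))) ≤
      N * (sv X (cv F (TT G)) - sv X (cv (TT F) (TT G))) := by
      apply mul_le_mul_of_nonneg_left _ (by positivity)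
      linarith
    push_cast
    linarith

lemma van_tt {X : ℝ} (hX : 0 ≤ X) {F G : ℝ → ℝ} (hF : Good F) (hG : Good G)
    (h : Van (cv F G) X) : Van (cv F (TT G)) X := by
  have h1 : sv X (cv F G) = X := le_antisymm (sv_le hX) (le_sv hX le_rfl h)
  have h2 : sv X (cv F G) ≤ sv X (cv F (TT G)) := by
    by_contra! hlt
    obtain ⟨N, hN⟩ := exists_nat_gt (X / (sv X (cv F G) - sv X (cv F (TT G))))
    rw [div_lt_iff₀ (by linarith)] at hN
    linarith [drop_iter hX N hF hG hlt, sv_le (u := cv F (TT G)) hX]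
  rw [h1] at h2
  exact (sv_van hX (hF.vancv hG.tt)).mono h2

lemma van_pow {X : ℝ} (hX : 0 ≤ X) {F G : ℝ → ℝ} (hF : Good F) (hG : Good G)
    (h : Van (cv F G) X) (n : ℕ) :
    Good (fun s => s ^ n * G s) ∧ Van (cv F (fun s => s ^ n * G s)) X := by
  induction n with
  | zero => simpa using ⟨hG, h⟩
  | succ n ih =>
    have e : (fun s => s ^ (n+1) * G s) = TT (fun s => s ^ n * G s) := by
      ext s; simp only [TT]; ring
    rw [e]
    exact ⟨ih.1.tt, van_tt hX hF ih.1 ih.2⟩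

lemma prod_zero {X : ℝ} (hX : 0 ≤ X) {F G : ℝ → ℝ} (hF : Good F) (hG : Good G)
    (h : Van (cv F G) X) : ∀ᵐ z : ℝ, ∀ᵐ s : ℝ, z < X → F (z - s) * G s = 0 := by
  obtain ⟨R, hR⟩ := hG.2.2
  filter_upwards [ae_all_iff.2 fun n => (van_pow hX hF hG h n).2, cv_ex hG.2.1 hF.2.1] with z hz hi
  by_cases hzX : z < X
  swap
  · simp [hzX]
  replace hz := fun n => hz n hzX
  have hi' : Integrable (fun s => F (z - s) * G s) := by simpa only [mul_comm] using hi
  have key := phrag _ hi' R (Filter.Eventually.of_forall fun s hs => by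
    have : G s = 0 := by
      by_contra h0
      linarith [(hR s h0).2]
    simp [this]) 0 ?_
  · have h0 : ∀ᵐ s : ℝ, s ≠ 0 := by simp [ae_iff]
    filter_upwards [key, h0] with s hs hs0 _
    rcases lt_or_gt_of_ne hs0 with h1 | h1
    · have : G s = 0 := by
        by_contra h0
        linarith [(hR s h0).1]
      simp [this]
    · exact hs h1
  · intro n
    have hs := phrag_hasSum _ hi' (fun s => n * s) (by fun_prop) (n * R)
      (Filter.Eventually.of_forall fun s hs => by
        have := hR s (right_ne_zero_of_mul hs)
        rw [abs_of_nonneg (by have := this.1; positivity)]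
        exact mul_le_mul_of_nonneg_left this.2 (by positivity))
    have : ∀ k : ℕ, ∫ s, (n * s) ^ k / k.factorial * (F (z - s) * G s) = 0 := by
      intro k
      have e : ∀ s, ((n:ℝ) * s) ^ k / k.factorial * (F (z - s) * G s) =
          (n ^ k / k.factorial) * (F (z - s) * (s ^ k * G s)) := fun s => by
        rw [mul_pow]; ring
      simp_rw [e]
      rw [integral_const_mul, ← cv_swap F (fun s => s ^ k * G s) z, hz k, mul_zero]
    simp_rw [this] at hs
    rw [hs.unique hasSum_zero, abs_zero]

lemma main_good {X : ℝ} (hX : 0 ≤ X) {F G : ℝ → ℝ} (hF : Good F) (hG : Good G)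
    (h : Van (cv F G) X) : ∃ l m : ℝ, 0 ≤ l ∧ 0 ≤ m ∧ X = l + m ∧ Van F l ∧ Van G m := by
  have h1 := prod_zero hX hF hG h
  rw [Measure.ae_ae_comm] at h1
  swap
  · have m1 : MeasurableSet {x : ℝ × ℝ | F (x.1 - x.2) * G x.2 = 0} :=
      measurableSet_eq_fun ((hF.1.comp (by fun_prop)).mul (hG.1.comp (by fun_prop))) measurable_const
    have m2 : MeasurableSet {x : ℝ × ℝ | x.1 < X} := measurableSet_lt (by fun_prop) measurable_const
    exact m2.imp m1
  refine ⟨sv X F, X - sv X F, sv_nonneg, sub_nonneg.2 (sv_le hX), by ring, sv_van hX hF.van, ?_⟩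
  filter_upwards [h1, hG.van] with s hs h0 hlt
  by_contra hne
  have hs0 : 0 ≤ s := not_lt.1 fun h => hne (h0 h)
  have hv : Van F (X - s) := by
    have := (measurePreserving_add_right (volume : Measure ℝ) s).quasiMeasurePreserving.ae hs
    filter_upwards [this] with t ht hlt
    have := ht (by linarith)
    simpa [hne] using this
  have := le_sv (X := X) (by linarith [sv_nonneg (X := X) (u := F)]) (by linarith) hv
  linarith

lemma good_mk {a b : ℝ} {f : ℝ → ℝ} (hf : IntegrableOn f (Icc a b)) :
    ∃ F, Good F ∧ ∀ᵐ x, F x = (Icc 0 (b - a)).indicator (fun x => f (x + a)) x := by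
  have h1 : Integrable ((Icc a b).indicator f) := (integrable_indicator_iff measurableSet_Icc).2 hf
  have h2 : Integrable (fun x => (Icc a b).indicator f (x + a)) := h1.comp_add_right a
  have e : ∀ x, (Icc a b).indicator f (x + a) = (Icc 0 (b - a)).indicator (fun x => f (x + a)) x := by
    intro x
    simp only [indicator, mem_Icc]
    congr 1
    simp [le_sub_iff_add_le]
  have hm := h2.1.ae_eq_mk
  have hms := h2.1.stronglyMeasurable_mk.measurable
  refine ⟨(Icc 0 (b - a)).indicator (h2.1.mk _), ⟨hms.indicator measurableSet_Icc, (h2.congr hm).indicator measurableSet_Icc,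
    b - a, fun x hx => mem_Icc.1 (mem_of_indicator_ne_zero hx)⟩, ?_⟩
  filter_upwards [hm] with x hx
  by_cases hmem : x ∈ Icc 0 (b - a)
  · rw [indicator_of_mem hmem, ← hx, e]
  · rw [indicator_of_notMem hmem, indicator_of_notMem hmem]

lemma van_back {a b l : ℝ} {f F : ℝ → ℝ} (hl : l ≤ b - a)
    (hF : ∀ᵐ x, F x = (Icc 0 (b - a)).indicator (fun x => f (x + a)) x) (h : Van F l) :
    ∀ᵐ t ∂(volume.restrict (Icc a (a + l))), f t = 0 := by
  rw [ae_restrict_iff' measurableSet_Icc]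
  have h1 := (measurePreserving_sub_right (volume : Measure ℝ) a).quasiMeasurePreserving.ae hF
  have h2 := (measurePreserving_sub_right (volume : Measure ℝ) a).quasiMeasurePreserving.ae h
  have h0 : ∀ᵐ s : ℝ, s ≠ a + l := by simp [ae_iff]
  filter_upwards [h1, h2, h0] with t h1 h2 h0 ht
  have := h2 (by have := lt_of_le_of_ne ht.2 h0; linarith)
  rw [h1, indicator_of_mem (mem_Icc.2 ⟨by linarith [ht.1], by linarith [ht.2]⟩)] at this
  simpa using this

theorem titchmarsh (a b : ℝ) (hab : a ≤ b) (f g : ℝ → ℝ)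
    (hf : IntegrableOn f (Icc a b)) (hg : IntegrableOn g (Icc a b))
    (hconv : ∀ᵐ t ∂(volume.restrict (Icc a b)), (∫ s in a..t, f (t - s + a) * g s) = 0) :
    ∃ lam mu : ℝ, 0 ≤ lam ∧ 0 ≤ mu ∧ b - a ≤ lam + mu ∧
      (∀ᵐ t ∂(volume.restrict (Icc a (a + lam))), f t = 0) ∧
      (∀ᵐ t ∂(volume.restrict (Icc a (a + mu))), g t = 0) := by
  obtain ⟨F, hF, eF⟩ := good_mk hf
  obtain ⟨G, hG, eG⟩ := good_mk hg
  have hv : Van (cv F G) (b - a) := by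
    rw [ae_restrict_iff' measurableSet_Icc] at hconv
    have h1 := (measurePreserving_add_right (volume : Measure ℝ) a).quasiMeasurePreserving.ae hconv
    rw [cv_congr eF eG]
    filter_upwards [h1] with z hz hlt
    rcases lt_or_ge z 0 with hz0 | hz0
    · rw [cv_swap]
      refine integral_eq_zero_of_ae (Filter.Eventually.of_forall fun s => ?_)
      rcases lt_or_ge s 0 with hs | hs
      · have : s ∉ Icc 0 (b - a) := fun h => by linarith [h.1]
        simp [this]
      · have : z - s ∉ Icc 0 (b - a) := fun h => by linarith [h.1]
        simp only [indicator_of_notMem this, zero_mul, Pi.zero_apply]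
    · have h2 := hz ⟨by linarith, by linarith⟩
      rw [intervalIntegral.integral_of_le (by linarith), ← integral_Icc_eq_integral_Ioc,
        ← integral_indicator measurableSet_Icc, ← integral_add_right_eq_self _ a] at h2
      rw [cv_swap]
      refine Eq.trans ?_ h2
      congr 1 with s
      by_cases hs : 0 ≤ s ∧ s ≤ z
      · rw [indicator_of_mem (by constructor <;> linarith [hs.1, hs.2]),
          indicator_of_mem (by constructor <;> linarith [hs.1, hs.2]),
          indicator_of_mem (by constructor <;> linarith [hs.1, hs.2])]
        congr 2; ring
      · rw [indicator_of_notMem (s := Icc a (z + a)) (fun h => hs ⟨by linarith [h.1], by linarith [h.2]⟩)]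
        by_cases hs0 : 0 ≤ s
        · rw [indicator_of_notMem (fun h => hs ⟨hs0, by linarith [h.1]⟩), zero_mul]
        · rw [indicator_of_notMem (a := s) (fun h => hs0 h.1), mul_zero]
  obtain ⟨l, m, hl, hm, he, vF, vG⟩ := main_good (sub_nonneg.2 hab) hF hG hv
  exact ⟨l, m, hl, hm, he.le, van_back (by linarith) eF vF, van_back (by linarith) eG vG⟩
end

section
/- If g ∈ L¹[a,b] is not almost-everywhere zero on any interval [a, a+ε] with ε > 0, then the convolution operator C_a(g) : L¹[a,b] → L¹[a,b], defined by (C_a(g) f)(t) = ∫_a^t g(t−s+a) f(s) ds, is injective. -/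
open MeasureTheory Set

/-- Convolution operator with kernel `g` and base point `a`. -/
noncomputable def convOp (a : ℝ) (g f : ℝ → ℝ) (t : ℝ) : ℝ :=
  ∫ s in a..t, g (t - s + a) * f s


lemma titch_factor_le {c w u : ℂ} {R : ℝ} (hu : u ∈ Metric.closedBall c R)
    (hw : w ∈ Metric.ball c R) (hwu : w ≠ u) :
    Real.log ‖w - u‖ ≤
      Real.circleAverage ((Complex.re ∘ herglotzRieszKernel c w) * (fun z => Real.log ‖z - u‖)) c R := by
  have hR : 0 < R := Metric.pos_of_mem_ball hw
  rcases eq_or_lt_of_le (Metric.mem_closedBall.1 hu) with h | h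
  · exact (circleAverage_re_herglotzRieszKernel_mul_log (ρ := u) (Metric.mem_sphere.2 h) hw).ge
  · set h0 : ℂ → ℂ := fun z => R - (starRingEnd ℂ) (u - c) * (z - c) / R with hh0
    have hRc : (R : ℂ) ≠ 0 := by exact_mod_cast hR.ne'
    -- the key identity
    have key : ∀ z : ℂ, R ^ 2 * (‖h0 z‖ ^ 2 - ‖z - u‖ ^ 2)
        = (R ^ 2 - ‖z - c‖ ^ 2) * (R ^ 2 - ‖u - c‖ ^ 2) := by
      intro z
      have e1 : ‖(R : ℂ) * h0 z‖ ^ 2 = R ^ 2 * ‖h0 z‖ ^ 2 := by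
        rw [norm_mul, mul_pow]; simp
      have e2 : (R : ℂ) * h0 z = R ^ 2 - (starRingEnd ℂ) (u - c) * (z - c) := by
        simp only [hh0]; field_simp
      rw [mul_sub, ← e1, e2]
      have e3 : z - u = (z - c) - (u - c) := by ring
      rw [e3]
      generalize z - c = p
      generalize u - c = q
      simp only [← Complex.normSq_eq_norm_sq, Complex.normSq_apply]
      simp [pow_two]
      ring
    rw [dist_eq_norm] at h
    have hne : ∀ z ∈ Metric.closedBall c R, h0 z ≠ 0 := by
      intro z hz h1
      have h2 : (starRingEnd ℂ) (u - c) * (z - c) = (R : ℂ) ^ 2 := by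
        have : (R : ℂ) - (starRingEnd ℂ) (u - c) * (z - c) / R = 0 := h1
        field_simp at this
        linear_combination -this
      have h3 := congrArg norm h2
      rw [norm_mul, norm_pow, RCLike.norm_conj] at h3
      simp only [Complex.norm_real, Real.norm_eq_abs, sq_abs] at h3
      rw [Metric.mem_closedBall, dist_eq_norm] at hz
      nlinarith [norm_nonneg (u - c), norm_nonneg (z - c)]
    have han : AnalyticOnNhd ℂ h0 (Metric.closedBall c R) := by
      intro x hx
      simp only [hh0]
      fun_prop (disch := assumption)
    have hP := InnerProductSpace.HarmonicOnNhd.circleAverage_re_herglotzRieszKernel_smul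
      (f := fun z => Real.log ‖h0 z‖) (c := c) (R := R) (w := w)
      (fun x hx ↦ (han x hx).harmonicAt_log_norm (hne x hx)) hw
    have hle : ‖w - u‖ ≤ ‖h0 w‖ := by
      have := key w
      rw [Metric.mem_ball, dist_eq_norm] at hw
      have h4 : 0 ≤ (R ^ 2 - ‖w - c‖ ^ 2) * (R ^ 2 - ‖u - c‖ ^ 2) := by
        apply mul_nonneg <;> nlinarith [norm_nonneg (w - c), norm_nonneg (u - c)]
      rw [← this] at h4
      have h5 : 0 ≤ ‖h0 w‖ ^ 2 - ‖w - u‖ ^ 2 := nonneg_of_mul_nonneg_right h4 (by positivity)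
      exact (sq_le_sq₀ (norm_nonneg _) (norm_nonneg _)).1 (by linarith)
    calc Real.log ‖w - u‖ ≤ Real.log ‖h0 w‖ :=
          Real.log_le_log (norm_pos_iff.2 (sub_ne_zero.2 hwu)) hle
      _ = _ := hP.symm
      _ = _ := by
        apply Real.circleAverage_congr_sphere
        intro z hz
        rw [abs_of_pos hR, mem_sphere_iff_norm] at hz
        have := key z
        rw [hz, sub_self, zero_mul] at this
        have h5 : ‖h0 z‖ ^ 2 - ‖z - u‖ ^ 2 = 0 := by
          rcases mul_eq_zero.1 this with h | h
          · exact absurd h (by positivity)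
          · exact h
        have h6 : ‖h0 z‖ = ‖z - u‖ :=
          (sq_eq_sq₀ (norm_nonneg _) (norm_nonneg _)).1 (by linarith)
        simp [h6]

lemma titch_kernel_integrable {c w : ℂ} {R : ℝ} (hw : w ∈ Metric.ball c R) {f : ℂ → ℝ}
    (hf : CircleIntegrable f c R) :
    CircleIntegrable ((Complex.re ∘ herglotzRieszKernel c w) * f) c R := by
  unfold CircleIntegrable at *
  have hc : Continuous (fun θ => (Complex.re ∘ herglotzRieszKernel c w) (circleMap c R θ)) := by
    have := continuousOn_herglotzRieszKernel_sphere hw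
    have h2 := this.comp_continuous (continuous_circleMap c R) (fun θ => circleMap_mem_sphere' c R θ)
    exact Complex.continuous_re.comp h2
  exact hf.continuousOn_mul hc.continuousOn

lemma titch_poisson_le {c w : ℂ} {R : ℝ} {F : ℂ → ℂ} (hF : AnalyticOnNhd ℂ F (Metric.closedBall c R))
    (hw : w ∈ Metric.ball c R) (hFw : F w ≠ 0) :
    Real.log ‖F w‖ ≤
      Real.circleAverage ((Complex.re ∘ herglotzRieszKernel c w) * (fun z => Real.log ‖F z‖)) c R := by
  have hR : 0 < R := Metric.pos_of_mem_ball hw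
  set CB := Metric.closedBall c R with hCB
  have hwCB : w ∈ CB := Metric.ball_subset_closedBall hw
  have hm : MeromorphicOn F CB := hF.meromorphicOn
  have hordw : meromorphicOrderAt F w = 0 := by
    rw [(hF w hwCB).meromorphicNFAt.meromorphicOrderAt_eq_zero_iff]
    exact hFw
  have hord : ∀ u : CB, meromorphicOrderAt F u ≠ ⊤ := by
    rw [← hm.exists_meromorphicOrderAt_ne_top_iff_forall
      ⟨⟨w, hwCB⟩, (convex_closedBall c R).isPreconnected⟩]
    exact ⟨⟨w, hwCB⟩, by simp [hordw]⟩
  have hfin := (MeromorphicOn.divisor F CB).finiteSupport (isCompact_closedBall c R)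
  obtain ⟨g, h₁g, h₂g, h₃g⟩ := hm.extract_zeros_poles hord hfin
  have hlog := MeromorphicOn.extract_zeros_poles_log h₂g h₃g
  have hacc : AccPt w (Filter.principal CB) := by
    apply accPt_iff_frequently_nhdsNE.mpr
    apply Filter.Eventually.frequently
    apply Filter.Eventually.filter_mono nhdsWithin_le_nhds
    exact Filter.mem_of_superset (Metric.isOpen_ball.mem_nhds hw) Metric.ball_subset_closedBall
  have hval := MeromorphicOn.log_norm_meromorphicTrailingCoeffAt_extract_zeros_poles hfin hwCB hacc
    (hm w hwCB) (h₁g w hwCB) (h₂g ⟨w, hwCB⟩) h₃g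
  rw [(hF w hwCB).meromorphicTrailingCoeffAt_of_ne_zero hFw] at hval
  set D := MeromorphicOn.divisor F CB with hD
  have hDnn : ∀ u, 0 ≤ D u := fun u => (MeromorphicOn.AnalyticOnNhd.divisor_nonneg hF) u
  have hDw : D w = 0 := by
    rw [hD, MeromorphicOn.divisor_apply hm hwCB, hordw]; rfl
  have hDsupp : ∀ u, D u ≠ 0 → u ∈ CB := fun u hu => D.supportWithinDomain hu
  have hsum : ∀ z : ℂ, (∑ᶠ u, ((D u : ℝ) * Real.log ‖z - u‖))
      = ∑ u ∈ hfin.toFinset, (D u : ℝ) * Real.log ‖z - u‖ := by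
    intro z
    apply finsum_eq_sum_of_support_subset
    intro u hu
    simp only [Finite.coe_toFinset, Function.mem_support] at hu ⊢
    intro h0
    apply hu
    have h0' : D u = 0 := h0
    simp [h0']
  have hsum' : (∑ᶠ u, (fun z : ℂ => (D u : ℝ) * Real.log ‖z - u‖))
      = ∑ u ∈ hfin.toFinset, fun z : ℂ => (D u : ℝ) * Real.log ‖z - u‖ := by
    apply finsum_eq_sum_of_support_subset
    intro u hu
    simp only [Finite.coe_toFinset, Function.mem_support] at hu ⊢
    intro h0
    apply hu
    have h0' : D u = 0 := h0
    ext z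
    simp [h0']
  set P := (Complex.re ∘ herglotzRieszKernel c w) with hP
  have hint1 : ∀ u, CircleIntegrable (P * fun z => Real.log ‖z - u‖) c R := fun u =>
    titch_kernel_integrable hw (circleIntegrable_log_norm_sub_const R)
  have hint2 : CircleIntegrable (P * fun z => Real.log ‖g z‖) c R :=
    titch_kernel_integrable hw
      (MeromorphicOn.circleIntegrable_log_norm_of_nonneg
        (fun z hz => (h₁g z (Metric.sphere_subset_closedBall hz)).meromorphicAt) hR.le)
  have hgP : Real.circleAverage (P * fun z => Real.log ‖g z‖) c R = Real.log ‖g w‖ :=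
    InnerProductSpace.HarmonicOnNhd.circleAverage_re_herglotzRieszKernel_smul
      (f := fun z => Real.log ‖g z‖) (c := c) (R := R) (w := w)
      (fun x hx ↦ (h₁g x hx).harmonicAt_log_norm (h₂g ⟨x, hx⟩)) hw
  have hmain : Real.circleAverage (P * (fun z => Real.log ‖F z‖)) c R =
      Real.circleAverage ((∑ u ∈ hfin.toFinset, (D u : ℝ) • (P * fun z => Real.log ‖z - u‖))
        + (P * fun z => Real.log ‖g z‖)) c R := by
    apply Real.circleAverage_congr_codiscreteWithin _ hR.ne'
    rw [abs_of_pos hR]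
    filter_upwards [Filter.codiscreteWithin_mono Metric.sphere_subset_closedBall hlog] with z hz
    rw [hsum'] at hz
    simp only [Pi.mul_apply, Pi.add_apply, Finset.sum_apply, Pi.smul_apply, smul_eq_mul] at hz ⊢
    rw [hz, mul_add, Finset.mul_sum]
    congr 1
    apply Finset.sum_congr rfl
    intro u _
    ring
  rw [hmain, Real.circleAverage_add _ hint2, Real.circleAverage_sum, hgP, hval, hsum]
  · gcongr with u hu
    rw [Real.circleAverage_smul, smul_eq_mul]
    have hDu : D u ≠ 0 := by simpa using hu
    apply mul_le_mul_of_nonneg_left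
    · apply titch_factor_le (hDsupp u hDu) hw
      rintro rfl
      exact hDu hDw
    · exact_mod_cast hDnn u
  · intro u _
    exact (hint1 u).const_smul
  · exact CircleIntegrable.sum _ fun u _ => (hint1 u).const_smul

lemma titch_harnack {c w : ℂ} {R : ℝ} {F : ℂ → ℂ} (hF : AnalyticOnNhd ℂ F (Metric.closedBall c R))
    (hw : w ∈ Metric.ball c R) (hb : ∀ z ∈ Metric.closedBall c R, ‖F z‖ ≤ 1) :
    ‖F w‖ ≤ Real.exp ((R - ‖w - c‖) / (R + ‖w - c‖) * Real.circleAverage (fun z => Real.log ‖F z‖) c R) := by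
  by_cases hFw : F w = 0
  · rw [hFw, norm_zero]; positivity
  have hR : 0 < R := Metric.pos_of_mem_ball hw
  rw [← Real.log_le_iff_le_exp (norm_pos_iff.2 hFw)]
  refine (titch_poisson_le hF hw hFw).trans ?_
  rw [← smul_eq_mul ((R - ‖w - c‖) / (R + ‖w - c‖)), ← Real.circleAverage_smul]
  have hi : CircleIntegrable (fun z => Real.log ‖F z‖) c R :=
    MeromorphicOn.circleIntegrable_log_norm_of_nonneg
        (fun z hz => (hF z (Metric.sphere_subset_closedBall hz)).meromorphicAt) hR.le
  apply Real.circleAverage_mono (titch_kernel_integrable hw hi) hi.const_smul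
  intro z hz
  rw [abs_of_pos hR] at hz
  have h1 := le_re_herglotzRieszKernel hz hw
  have h2 : Real.log ‖F z‖ ≤ 0 :=
    Real.log_nonpos (norm_nonneg _) (hb z (Metric.sphere_subset_closedBall hz))
  simp only [Pi.mul_apply, Pi.smul_apply, smul_eq_mul, Function.comp_apply]
  exact mul_le_mul_of_nonpos_right h1 h2

lemma titch_avg_add {F G : ℂ → ℂ} (hF : Differentiable ℂ F) (hG : Differentiable ℂ G)
    (hF0 : ∃ z, F z ≠ 0) (hG0 : ∃ z, G z ≠ 0) {T : ℝ}
    (hFG : ∀ z : ℂ, 0 ≤ z.re → ‖F z * G z‖ ≤ Real.exp (-(T * z.re))) {R : ℝ} (hR : 0 < R) :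
    Real.circleAverage (fun z => Real.log ‖F z‖) R R
      + Real.circleAverage (fun z => Real.log ‖G z‖) R R ≤ -(T * R) := by
  have hFa : AnalyticOnNhd ℂ F univ := fun z _ => hF.analyticAt z
  have hGa : AnalyticOnNhd ℂ G univ := fun z _ => hG.analyticAt z
  have hi : ∀ {H : ℂ → ℂ}, Differentiable ℂ H →
      CircleIntegrable (fun z => Real.log ‖H z‖) R R := fun hH =>
    MeromorphicOn.circleIntegrable_log_norm_of_nonneg
        (fun z hz => (hH.analyticAt z).meromorphicAt) hR.le
  have hE : Differentiable ℂ (fun z : ℂ => Complex.exp (T * z)) := by fun_prop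
  have hEavg : Real.circleAverage (fun z : ℂ => Real.log ‖Complex.exp (T * z)‖) R R = T * R := by
    rw [AnalyticOnNhd.circleAverage_log_norm_of_ne_zero (fun z _ => hE.analyticAt z)
      (fun z _ => Complex.exp_ne_zero _)]
    simp [Complex.norm_exp]
  have hnz : ∀ {H : ℂ → ℂ}, Differentiable ℂ H → (∃ z, H z ≠ 0) →
      ∀ᶠ z in Filter.codiscreteWithin (Metric.sphere (R : ℂ) |R|), H z ≠ 0 := by
    intro H hH ⟨z0, hz0⟩
    have hHa : AnalyticOnNhd ℂ H univ := fun z _ => hH.analyticAt z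
    have := hHa.preimage_zero_mem_codiscrete (x := z0) hz0
    apply Filter.codiscreteWithin_mono (subset_univ _) 
    filter_upwards [this] with z hz
    simpa using hz
  have hsum : Real.circleAverage (fun z => Real.log ‖Complex.exp (T * z) * (F z * G z)‖) R R
      = T * R + (Real.circleAverage (fun z => Real.log ‖F z‖) R R
      + Real.circleAverage (fun z => Real.log ‖G z‖) R R) := by
    rw [← hEavg, ← Real.circleAverage_add (hi hF) (hi hG),
      ← Real.circleAverage_add (hi hE) ((hi hF).add (hi hG))]
    apply Real.circleAverage_congr_codiscreteWithin _ hR.ne'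
    filter_upwards [hnz hF hF0, hnz hG hG0] with z h1 h2
    simp only [Pi.add_apply]
    rw [norm_mul, norm_mul, Real.log_mul, Real.log_mul] <;> simp [h1, h2]
  have hle : Real.circleAverage (fun z => Real.log ‖Complex.exp (T * z) * (F z * G z)‖) R R ≤ 0 := by
    apply Real.circleAverage_mono_on_of_le_circle (hi (hE.mul (hF.mul hG)))
    intro z hz
    apply Real.log_nonpos (norm_nonneg _)
    have hre : 0 ≤ z.re := by
      rw [abs_of_pos hR, mem_sphere_iff_norm] at hz
      have := Complex.abs_re_le_norm (z - R)
      rw [hz] at this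
      simp at this
      linarith [(abs_le.1 this).1]
    change ‖Complex.exp (T * z) * (F z * G z)‖ ≤ 1
    rw [norm_mul, Complex.norm_exp]
    calc _ ≤ Real.exp ((T * z : ℂ).re) * Real.exp (-(T * z.re)) := by
          gcongr; exact hFG z hre
      _ = 1 := by rw [← Real.exp_add]; simp
  linarith

lemma titch_decay {F : ℂ → ℂ} (hF : Differentiable ℂ F) {T : ℝ} (hT : 0 < T)
    (hF1 : ∀ z : ℂ, 0 ≤ z.re → ‖F z‖ ≤ 1)
    (hfr : ∃ᶠ R : ℝ in Filter.atTop,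
      Real.circleAverage (fun z => Real.log ‖F z‖) R R ≤ -(T * R) / 2) :
    ∀ z : ℂ, 0 < z.re → ‖F z‖ ≤ Real.exp (-(T / 4 * z.re)) := by
  intro z hz
  have hlim : Filter.Tendsto (fun R : ℝ => Real.exp (-(T / 2 * (z.re / 2 - ‖z‖ ^ 2 / 4 * R⁻¹))))
      Filter.atTop (nhds (Real.exp (-(T / 4 * z.re)))) := by
    have h1 : Filter.Tendsto (fun R : ℝ => -(T / 2 * (z.re / 2 - ‖z‖ ^ 2 / 4 * R⁻¹)))
      Filter.atTop (nhds (-(T / 2 * (z.re / 2 - ‖z‖ ^ 2 / 4 * 0)))) :=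
      ((tendsto_const_nhds.sub (tendsto_inv_atTop_zero.const_mul _)).const_mul _).neg
    have h2 : -(T / 2 * (z.re / 2 - ‖z‖ ^ 2 / 4 * 0)) = -(T / 4 * z.re) := by ring
    rw [h2] at h1
    exact (Real.continuous_exp.tendsto _).comp h1
  refine ge_of_tendsto_of_frequently hlim ?_
  have hev : ∀ᶠ R : ℝ in Filter.atTop, ‖z‖ ^ 2 / (2 * z.re) < R ∧ 0 < R :=
    (Filter.eventually_gt_atTop _).and (Filter.eventually_gt_atTop _)
  refine (hfr.and_eventually hev).mono ?_
  rintro R ⟨havg, hR, hR0⟩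
  have hsq : ‖z - R‖ ^ 2 = ‖z‖ ^ 2 - 2 * R * z.re + R ^ 2 := by
    simp only [← Complex.normSq_eq_norm_sq, Complex.normSq_apply]
    simp
    ring
  rw [div_lt_iff₀ (by positivity)] at hR
  have hlt : ‖z - R‖ < R := by
    apply lt_of_pow_lt_pow_left₀ 2 hR0.le
    nlinarith
  have hball : z ∈ Metric.ball (R : ℂ) R := by rwa [Metric.mem_ball, dist_eq_norm]
  refine (titch_harnack (fun z _ => hF.analyticAt z) hball ?_).trans ?_
  · intro y hy
    apply hF1
    rw [Metric.mem_closedBall, dist_eq_norm] at hy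
    have := (Complex.abs_re_le_norm (y - R)).trans hy
    simp at this
    linarith [(abs_le.1 this).1]
  · apply Real.exp_le_exp.2
    set n := ‖z - R‖ with hn
    have hn0 : 0 ≤ n := norm_nonneg _
    have hk : z.re / 2 - ‖z‖ ^ 2 / 4 * R⁻¹ ≤ (R - n) / (R + n) * R := by
      have e : (R - n) / (R + n) * R = (2 * R * z.re - ‖z‖ ^ 2) * R / (R + n) ^ 2 := by
        have : 2 * R * z.re - ‖z‖ ^ 2 = (R - n) * (R + n) := by nlinarith
        rw [this]; field_simp
      have e2 : z.re / 2 - ‖z‖ ^ 2 / 4 * R⁻¹ = (2 * R * z.re - ‖z‖ ^ 2) * R / (2 * R) ^ 2 := by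
        field_simp; ring
      rw [e, e2]
      apply div_le_div_of_nonneg_left
      · apply mul_nonneg _ hR0.le; linarith
      · positivity
      · gcongr; linarith
    have hk0 : 0 ≤ (R - n) / (R + n) := div_nonneg (by linarith) (by linarith)
    calc _ ≤ (R - n) / (R + n) * (-(T * R) / 2) := by gcongr
      _ = -(T / 2 * ((R - n) / (R + n) * R)) := by ring
      _ ≤ _ := by gcongr

lemma titch_complex {F G : ℂ → ℂ} (hF : Differentiable ℂ F) (hG : Differentiable ℂ G)
    {T : ℝ} (hT : 0 < T) (hF1 : ∀ z : ℂ, 0 ≤ z.re → ‖F z‖ ≤ 1) (hG1 : ∀ z : ℂ, 0 ≤ z.re → ‖G z‖ ≤ 1)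
    (hFG : ∀ z : ℂ, 0 ≤ z.re → ‖F z * G z‖ ≤ Real.exp (-(T * z.re))) :
    (∀ z : ℂ, 0 < z.re → ‖F z‖ ≤ Real.exp (-(T / 4 * z.re))) ∨
    (∀ z : ℂ, 0 < z.re → ‖G z‖ ≤ Real.exp (-(T / 4 * z.re))) := by
  by_cases hF0 : ∃ z, F z ≠ 0
  swap
  · push Not at hF0
    left; intro z _; rw [hF0, norm_zero]; positivity
  by_cases hG0 : ∃ z, G z ≠ 0
  swap
  · push Not at hG0
    right; intro z _; rw [hG0, norm_zero]; positivity
  have key : ∃ᶠ R : ℝ in Filter.atTop,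
      Real.circleAverage (fun z => Real.log ‖F z‖) R R ≤ -(T * R) / 2 ∨
      Real.circleAverage (fun z => Real.log ‖G z‖) R R ≤ -(T * R) / 2 := by
    apply Filter.Eventually.frequently
    filter_upwards [Filter.eventually_gt_atTop 0] with R hR
    have := titch_avg_add hF hG hF0 hG0 hFG hR
    by_contra! h
    linarith [h.1, h.2]
  rw [Filter.frequently_or_distrib] at key
  rcases key with h | h
  · exact Or.inl (titch_decay hF hT hF1 h)
  · exact Or.inr (titch_decay hG hT hG1 h)

/-- Laplace transform used in the proof of Titchmarsh's theorem. -/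
noncomputable def titchL (f : ℝ → ℝ) (z : ℂ) : ℂ := ∫ t : ℝ, Complex.exp (-(z * t)) * (f t : ℂ)

lemma titchL_differentiable {f : ℝ → ℝ} (hf : Integrable f) {T : ℝ} 
    (hs : ∀ t, t ∉ Icc 0 T → f t = 0) : Differentiable ℂ (titchL f) := by
  intro z0
  have hfm : AEStronglyMeasurable (fun t => (f t : ℂ)) volume := hf.ofReal.aestronglyMeasurable
  have hbd : ∀ z ∈ Metric.ball z0 1, ∀ t : ℝ, 
      ‖Complex.exp (-(z * t)) * (f t : ℂ)‖ ≤ Real.exp ((‖z0‖ + 1) * T) * ‖f t‖ := by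
    intro z hz t
    by_cases ht : t ∈ Icc 0 T
    · rw [norm_mul, Complex.norm_exp, Complex.norm_real]
      gcongr
      have h1 : ‖z‖ ≤ ‖z0‖ + 1 := by
        rw [Metric.mem_ball, dist_eq_norm] at hz
        have := norm_sub_norm_le z z0
        linarith
      have h2 : (-(z * t)).re ≤ ‖z‖ * t := by
        have := Complex.abs_re_le_norm z
        simp
        nlinarith [(abs_le.1 this).1, ht.1]
      have := norm_nonneg z
      nlinarith [ht.1, ht.2]
    · simp [hs t ht]
  have hmeas : ∀ z : ℂ, AEStronglyMeasurable (fun t : ℝ => Complex.exp (-(z * t)) * (f t : ℂ)) volume :=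
    fun z => (by fun_prop : Continuous fun t : ℝ => Complex.exp (-(z * t))).aestronglyMeasurable.mul hfm
  have := hasDerivAt_integral_of_dominated_loc_of_deriv_le (μ := volume) (𝕜 := ℂ)
    (F := fun (z : ℂ) (t : ℝ) => Complex.exp (-(z * t)) * (f t : ℂ))
    (F' := fun (z : ℂ) (t : ℝ) => -(t : ℂ) * (Complex.exp (-(z * t)) * (f t : ℂ)))
    (x₀ := z0) (s := Metric.ball z0 1)
    (bound := fun t => T * (Real.exp ((‖z0‖ + 1) * T) * ‖f t‖))
    (Metric.ball_mem_nhds z0 one_pos) (Filter.Eventually.of_forall hmeas) ?_ ?_ ?_ ?_ ?_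
  · exact this.2.differentiableAt
  · exact (hf.norm.const_mul _).mono' (hmeas z0)
      (Filter.Eventually.of_forall fun t => hbd z0 (Metric.mem_ball_self one_pos) t)
  · exact (by fun_prop : Continuous fun t : ℝ => -(t : ℂ)).aestronglyMeasurable.mul (hmeas z0)
  · refine Filter.Eventually.of_forall fun t z hz => ?_
    by_cases ht : t ∈ Icc 0 T
    · rw [norm_mul]
      apply mul_le_mul _ (hbd z hz t) (norm_nonneg _) (ht.1.trans ht.2)
      rw [norm_neg, Complex.norm_real, Real.norm_eq_abs, abs_of_nonneg ht.1]
      exact ht.2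
    · simp [hs t ht]
  · exact (hf.norm.const_mul _).const_mul _
  · refine Filter.Eventually.of_forall fun t z hz => ?_
    have h1 : HasDerivAt (fun z : ℂ => -(z * t)) (-(1 * t)) z := ((hasDerivAt_id z).mul_const _).neg
    refine (h1.cexp.mul_const (f t : ℂ)).congr_deriv ?_
    ring

lemma titchL_bound {f : ℝ → ℝ} (hf : Integrable f) (c : ℝ) (z : ℂ)
    (h : ∀ᵐ t, f t ≠ 0 → (c - t) * z.re ≤ 0) :
    ‖titchL f z‖ ≤ Real.exp (-(c * z.re)) * ∫ t, |f t| := by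
  rw [← integral_const_mul]
  apply norm_integral_le_of_norm_le (hf.abs.const_mul _)
  filter_upwards [h] with t ht
  by_cases h0 : f t = 0
  · simp [h0]
  rw [norm_mul, Complex.norm_exp, Complex.norm_real, Real.norm_eq_abs]
  gcongr
  have := ht h0
  simp
  linarith

lemma titch_fourier_unique {f : ℝ → ℝ} (hf : Integrable f)
    (h : ∀ y : ℝ, titchL f (-(y * Complex.I)) = 0) : ∀ᵐ t, f t = 0 := by
  set p : ℝ → ℝ := fun t => max (f t) 0 with hp
  set n : ℝ → ℝ := fun t => max (-f t) 0 with hn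
  have hpi : Integrable p := hf.pos_part
  have hni : Integrable n := hf.neg_part
  have hp0 : ∀ t, 0 ≤ p t := fun t => le_max_right _ _
  have hn0 : ∀ t, 0 ≤ n t := fun t => le_max_right _ _
  have hsub : ∀ t, f t = p t - n t := fun t => (max_zero_sub_eq_self (f t)).symm
  have hfin : ∀ {q : ℝ → ℝ}, Integrable q → (∀ t, 0 ≤ q t) →
      IsFiniteMeasure (volume.withDensity fun t => ENNReal.ofReal (q t)) := fun hq h0 =>
    isFiniteMeasure_withDensity_ofReal hq.2
  have hchar : ∀ {q : ℝ → ℝ}, Integrable q → (∀ t, 0 ≤ q t) → ∀ y : ℝ,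
      charFun (volume.withDensity fun t => ENNReal.ofReal (q t)) y
        = ∫ t : ℝ, Complex.exp (-(-(y * Complex.I) * t)) * (q t : ℂ) := by
    intro q hq h0 y
    rw [charFun_apply_real, integral_withDensity_eq_integral_toReal_smul₀
      hq.aestronglyMeasurable.aemeasurable.ennreal_ofReal (by simp)]
    congr 1
    ext t
    rw [ENNReal.toReal_ofReal (h0 t), Complex.real_smul, mul_comm]
    congr 2
    ring
  have hint : ∀ {q : ℝ → ℝ}, Integrable q → ∀ y : ℝ,
      Integrable fun t : ℝ => Complex.exp (-(-(y * Complex.I) * t)) * (q t : ℂ) := by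
    intro q hq y
    apply hq.norm.mono'
    · exact (by fun_prop : Continuous fun t : ℝ => Complex.exp (-(-(y * Complex.I) * t))).aestronglyMeasurable.mul
        hq.ofReal.aestronglyMeasurable
    · refine Filter.Eventually.of_forall fun t => ?_
      rw [norm_mul, Complex.norm_exp, Complex.norm_real]
      simp
  have := hfin hpi hp0
  have := hfin hni hn0
  have heq : (volume.withDensity fun t => ENNReal.ofReal (p t))
      = volume.withDensity fun t => ENNReal.ofReal (n t) := by
    apply Measure.ext_of_charFun
    ext y
    rw [hchar hpi hp0, hchar hni hn0, ← sub_eq_zero, ← integral_sub (hint hpi y) (hint hni y), ← h y]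
    unfold titchL
    congr 1
    ext t
    rw [hsub t]
    push_cast
    ring
  have hae := (withDensity_eq_iff (hpi.aestronglyMeasurable.aemeasurable.ennreal_ofReal)
    (hni.aestronglyMeasurable.aemeasurable.ennreal_ofReal) (hpi.lintegral_lt_top.ne)).1 heq
  filter_upwards [hae] with t ht
  have : p t = n t := (ENNReal.ofReal_eq_ofReal_iff (hp0 t) (hn0 t)).1 ht
  rw [hsub t, this, sub_self]

lemma titch_vanish {f : ℝ → ℝ} (hf : Integrable f) {T : ℝ} 
    (hs : ∀ t, t ∉ Icc 0 T → f t = 0) {c C : ℝ}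
    (hdec : ∀ z : ℂ, 0 < z.re → ‖titchL f z‖ ≤ C * Real.exp (-(c * z.re))) :
    ∀ᵐ t, t ≤ c → f t = 0 := by
  set f1 : ℝ → ℝ := (Iic c).indicator f with hf1
  set f2 : ℝ → ℝ := (Ioi c).indicator f with hf2
  have hi1 : Integrable f1 := hf.indicator measurableSet_Iic
  have hi2 : Integrable f2 := hf.indicator measurableSet_Ioi
  have hs1 : ∀ t, t ∉ Icc 0 T → f1 t = 0 := by
    intro t ht; simp [hf1, indicator, hs t ht]
  have hs2 : ∀ t, t ∉ Icc 0 T → f2 t = 0 := by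
    intro t ht; simp [hf2, indicator, hs t ht]
  have hsum : ∀ t, f t = f1 t + f2 t := by
    intro t
    by_cases h : t ≤ c
    · simp [hf1, hf2, h]
    · simp [hf1, hf2, h, not_le.1 h]
  have hint : ∀ {q : ℝ → ℝ}, Integrable q → (∀ t, t ∉ Icc 0 T → q t = 0) → ∀ z : ℂ,
      Integrable fun t : ℝ => Complex.exp (-(z * t)) * (q t : ℂ) := by
    intro q hq hqs z
    apply (hq.norm.const_mul (Real.exp (‖z‖ * T))).mono'
    · exact (by fun_prop : Continuous fun t : ℝ => Complex.exp (-(z * t))).aestronglyMeasurable.mul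
        hq.ofReal.aestronglyMeasurable
    · refine Filter.Eventually.of_forall fun t => ?_
      by_cases ht : t ∈ Icc 0 T
      · rw [norm_mul, Complex.norm_exp, Complex.norm_real]
        gcongr
        have := Complex.abs_re_le_norm z
        simp
        nlinarith [(abs_le.1 this).1, ht.1, ht.2, norm_nonneg z]
      · simp [hqs t ht]
  have hLsum : ∀ z, titchL f1 z = titchL f z - titchL f2 z := by
    intro z
    unfold titchL
    rw [← integral_sub (hint hf hs z) (hint hi2 hs2 z)]
    congr 1
    ext t
    rw [hsum t]; push_cast; ring
  set K : ℂ → ℂ := fun z => Complex.exp (c * z) * titchL f1 z with hK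
  have hKd : Differentiable ℂ K := by
    have := titchL_differentiable hi1 hs1
    simp only [hK]; fun_prop
  have hE : ∀ z : ℂ, ‖Complex.exp (c * z)‖ = Real.exp (c * z.re) := by
    intro z; rw [Complex.norm_exp]; simp
  have hEE : ∀ (z : ℂ) (A : ℝ), Real.exp (c * z.re) * (Real.exp (-(c * z.re)) * A) = A := by
    intro z A; rw [← mul_assoc, ← Real.exp_add]; simp
  have hKb : Bornology.IsBounded (range K) := by
    rw [isBounded_iff_forall_norm_le]
    refine ⟨max (∫ t, |f1 t|) (C + ∫ t, |f2 t|), ?_⟩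
    rintro _ ⟨z, rfl⟩
    simp only [hK]
    rw [norm_mul, hE]
    rcases le_or_gt z.re 0 with hz | hz
    · apply le_max_of_le_left
      have := titchL_bound hi1 c z (Filter.Eventually.of_forall fun t ht => by
        have : t ≤ c := by
          by_contra h; apply ht; simp [hf1, h]
        nlinarith)
      calc _ ≤ Real.exp (c * z.re) * (Real.exp (-(c * z.re)) * ∫ t, |f1 t|) := by gcongr
        _ = _ := hEE _ _
    · apply le_max_of_le_right
      have h2 := titchL_bound hi2 c z (Filter.Eventually.of_forall fun t ht => by
        have : c < t := by
          by_contra h; apply ht; simp [hf2, h]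
        nlinarith)
      rw [hLsum]
      calc _ ≤ Real.exp (c * z.re) * (C * Real.exp (-(c * z.re)) + Real.exp (-(c * z.re)) * ∫ t, |f2 t|) := by
            gcongr
            exact (norm_sub_le _ _).trans (add_le_add (hdec z hz) h2)
        _ = Real.exp (c * z.re) * (Real.exp (-(c * z.re)) * (C + ∫ t, |f2 t|)) := by ring
        _ = _ := hEE _ _
  have hconst : ∀ z w, K z = K w := fun z w => hKd.apply_eq_apply_of_bounded hKb z w
  have hlim : Filter.Tendsto (fun n : ℕ => K (-(n : ℂ))) Filter.atTop (nhds 0) := by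
    have hKeq : ∀ n : ℕ, K (-(n : ℂ)) = ∫ t : ℝ, Complex.exp (-(n * (c - t))) * (f1 t : ℂ) := by
      intro n
      simp only [hK, titchL]
      rw [← integral_const_mul]
      congr 1
      ext t
      rw [← mul_assoc, ← Complex.exp_add]
      congr 2
      ring
    simp only [hKeq]
    rw [show (0 : ℂ) = ∫ t : ℝ, (0 : ℂ) by simp]
    apply tendsto_integral_of_dominated_convergence (fun t => ‖f1 t‖)
    · intro n
      exact (by fun_prop : Continuous fun t : ℝ => Complex.exp (-(n * ((c : ℂ) - t)))).aestronglyMeasurable.mul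
        hi1.ofReal.aestronglyMeasurable
    · exact hi1.norm
    · intro n
      refine Filter.Eventually.of_forall fun t => ?_
      by_cases ht : t ≤ c
      · rw [norm_mul, Complex.norm_exp, Complex.norm_real]
        apply mul_le_of_le_one_left (norm_nonneg _)
        apply Real.exp_le_one_iff.2
        simp
        apply mul_nonneg (Nat.cast_nonneg n); linarith
      · simp [hf1, ht]
    · have hne : ∀ᵐ t : ℝ, t ≠ c := by
        simp [ae_iff]
      filter_upwards [hne] with t htc
      by_cases ht : t ≤ c
      · have hlt : t < c := lt_of_le_of_ne ht htc
        rw [tendsto_zero_iff_norm_tendsto_zero]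
        have : ∀ n : ℕ, ‖Complex.exp (-(n * ((c : ℂ) - t))) * (f1 t : ℂ)‖
            = Real.exp (-((n : ℝ) * (c - t))) * ‖f1 t‖ := by
          intro n
          rw [norm_mul, Complex.norm_exp, Complex.norm_real]
          simp
        simp only [this]
        rw [show (0 : ℝ) = 0 * ‖f1 t‖ by simp]
        apply Filter.Tendsto.mul_const
        apply Real.tendsto_exp_neg_atTop_nhds_zero.comp
        exact tendsto_natCast_atTop_atTop.atTop_mul_const (by linarith)
      · simp [hf1, ht]
  have hK0 : ∀ z, K z = 0 := by
    intro z
    have : Filter.Tendsto (fun n : ℕ => K (-(n : ℂ))) Filter.atTop (nhds (K z)) := by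
      simp only [fun n : ℕ => hconst (-(n : ℂ)) z]
      exact tendsto_const_nhds
    exact tendsto_nhds_unique this hlim
  have hz := titch_fourier_unique hi1 (fun y => by
    have := hK0 (-(y * Complex.I))
    simp only [hK] at this
    exact (mul_eq_zero.1 this).resolve_left (Complex.exp_ne_zero _))
  filter_upwards [hz] with t ht htc
  simpa [hf1, htc] using ht

lemma titchL_integrable {f : ℝ → ℝ} (hf : Integrable f) {T : ℝ}
    (hs : ∀ t, t ∉ Icc 0 T → f t = 0) (z : ℂ) (hz : 0 ≤ z.re) :
    Integrable (fun t : ℝ => Complex.exp (-(z * t)) * (f t : ℂ)) := by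
  refine hf.abs.mono' ((by fun_prop : Continuous fun t : ℝ => Complex.exp (-(z * t))).aestronglyMeasurable.mul hf.ofReal.aestronglyMeasurable) (Filter.Eventually.of_forall fun t => ?_)
  by_cases ht : t ∈ Icc 0 T
  · rw [norm_mul, Complex.norm_exp, Complex.norm_real, Real.norm_eq_abs]
    have : Real.exp (-(z * t)).re ≤ 1 := by
      rw [Real.exp_le_one_iff]
      simp
      exact mul_nonneg hz ht.1
    nlinarith [abs_nonneg (f t)]
  · simp [hs t ht]

lemma titchL_mul {f g : ℝ → ℝ} (hf : Integrable f) (hg : Integrable g) {T : ℝ}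
    (hfs : ∀ t, t ∉ Icc 0 T → f t = 0) (hgs : ∀ t, t ∉ Icc 0 T → g t = 0)
    (z : ℂ) (hz : 0 ≤ z.re) :
    titchL f z * titchL g z = titchL (fun t => ∫ u, f u * g (t - u)) z := by
  have h := integral_convolution (μ := volume) (ν := volume) (ContinuousLinearMap.mul ℂ ℂ)
    (titchL_integrable hf hfs z hz) (titchL_integrable hg hgs z hz)
  simp only [ContinuousLinearMap.mul_apply'] at h
  unfold titchL
  rw [← h]
  congr 1
  ext t
  rw [convolution_def, ← integral_complex_ofReal, ← integral_const_mul]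
  congr 1
  ext u
  simp only [ContinuousLinearMap.mul_apply']
  have : Complex.exp (-(z * t)) = Complex.exp (-(z * u)) * Complex.exp (-(z * ((t - u : ℝ) : ℂ))) := by
    rw [← Complex.exp_add]
    congr 1
    push_cast
    ring
  rw [this]
  push_cast
  ring

lemma titch_core {f g : ℝ → ℝ} (hf : Integrable f) (hg : Integrable g) {T : ℝ} (hT : 0 < T)
    (hfs : ∀ t, t ∉ Icc 0 T → f t = 0) (hgs : ∀ t, t ∉ Icc 0 T → g t = 0)
    (hh : ∀ᵐ t, t < T → ∫ u, f u * g (t - u) = 0) :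
    (∀ᵐ t, t ≤ T / 4 → f t = 0) ∨ (∀ᵐ t, t ≤ T / 4 → g t = 0) := by
  set A := ∫ t, |f t| with hA
  set B := ∫ t, |g t| with hB
  have hA0 : 0 ≤ A := integral_nonneg fun t => abs_nonneg _
  have hB0 : 0 ≤ B := integral_nonneg fun t => abs_nonneg _
  have hzero : ∀ {f : ℝ → ℝ}, Integrable f → ∫ t, |f t| = 0 → ∀ᵐ t, t ≤ T / 4 → f t = 0 := by
    intro f hf h0
    rw [integral_eq_zero_iff_of_nonneg (fun t => abs_nonneg _) hf.abs] at h0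
    filter_upwards [h0] with t ht _
    simpa using ht
  rcases hA0.eq_or_lt with h0 | hApos
  · exact Or.inl (hzero hf h0.symm)
  rcases hB0.eq_or_lt with h0 | hBpos
  · exact Or.inr (hzero hg h0.symm)
  have hconv : Integrable (fun t => ∫ u, f u * g (t - u)) :=
    hf.integrable_convolution (ContinuousLinearMap.mul ℝ ℝ) hg
  have hconvabs : Integrable (fun t => ∫ u, |f u| * |g (t - u)|) :=
    hf.abs.integrable_convolution (ContinuousLinearMap.mul ℝ ℝ) hg.abs
  have hle : ∫ t, |∫ u, f u * g (t - u)| ≤ A * B := by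
    have h := integral_convolution (μ := volume) (ν := volume) (ContinuousLinearMap.mul ℝ ℝ)
      hf.abs hg.abs
    simp only [ContinuousLinearMap.mul_apply'] at h
    rw [hA, hB, ← h]
    refine integral_mono hconv.abs hconvabs fun t => ?_
    have := norm_integral_le_integral_norm (μ := volume) (fun u => f u * g (t - u))
    simp only [norm_mul, Real.norm_eq_abs] at this
    exact this
  have hbound : ∀ {f : ℝ → ℝ}, Integrable f → (∀ t, t ∉ Icc 0 T → f t = 0) → ∀ z : ℂ, 0 ≤ z.re →
      ‖titchL f z‖ ≤ ∫ t, |f t| := by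
    intro f hf hs z hz
    have := titchL_bound hf 0 z (Filter.Eventually.of_forall fun t ht => by
      have : t ∈ Icc 0 T := by
        by_contra h
        exact ht (hs t h)
      nlinarith [mul_nonneg this.1 hz])
    simpa using this
  have key := titch_complex (F := fun z => (A : ℂ)⁻¹ * titchL f z) (G := fun z => (B : ℂ)⁻¹ * titchL g z)
    ((titchL_differentiable hf hfs).const_mul _) ((titchL_differentiable hg hgs).const_mul _) hT
    (fun z hz => ?_) (fun z hz => ?_) (fun z hz => ?_)
  · refine key.imp (fun k => ?_) (fun k => ?_)
    · refine titch_vanish hf hfs (C := A) fun z hz => ?_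
      have := k z hz
      rw [norm_mul, norm_inv, Complex.norm_real, Real.norm_eq_abs, abs_of_pos hApos,
        inv_mul_le_iff₀ hApos] at this
      exact this
    · refine titch_vanish hg hgs (C := B) fun z hz => ?_
      have := k z hz
      rw [norm_mul, norm_inv, Complex.norm_real, Real.norm_eq_abs, abs_of_pos hBpos,
        inv_mul_le_iff₀ hBpos] at this
      exact this
  · rw [norm_mul, norm_inv, Complex.norm_real, Real.norm_eq_abs, abs_of_pos hApos,
        inv_mul_le_iff₀ hApos, mul_one]
    exact hbound hf hfs z hz
  · rw [norm_mul, norm_inv, Complex.norm_real, Real.norm_eq_abs, abs_of_pos hBpos,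
        inv_mul_le_iff₀ hBpos, mul_one]
    exact hbound hg hgs z hz
  · have e : (A : ℂ)⁻¹ * titchL f z * ((B : ℂ)⁻¹ * titchL g z)
        = ((A * B : ℝ) : ℂ)⁻¹ * titchL (fun t => ∫ u, f u * g (t - u)) z := by
      rw [← titchL_mul hf hg hfs hgs z hz]
      push_cast
      rw [mul_inv]
      ring
    simp only [e]
    have hAB : 0 < A * B := mul_pos hApos hBpos
    rw [norm_mul, norm_inv, Complex.norm_real, Real.norm_eq_abs, abs_of_pos hAB,
        inv_mul_le_iff₀ hAB, mul_comm]
    refine (titchL_bound hconv T z ?_).trans (by gcongr)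
    filter_upwards [hh] with t ht h0
    have : T ≤ t := by
      by_contra h
      exact h0 (ht (not_le.1 h))
    nlinarith

lemma titch_step {f g : ℝ → ℝ} (hf : Integrable f) (hg : Integrable g) {T : ℝ}
    (hfs : ∀ t, t ∉ Icc 0 T → f t = 0) (hgs : ∀ t, t ∉ Icc 0 T → g t = 0)
    (hh : ∀ᵐ t, t < T → ∫ u, f u * g (t - u) = 0)
    (hnt : ∀ ε > 0, ¬ ∀ᵐ t, t ≤ ε → g t = 0) {s : ℝ} (hs0 : 0 ≤ s) (hsT : s < T)
    (hs : ∀ᵐ t, t ≤ s → f t = 0) : ∀ᵐ t, t ≤ s + (T - s) / 4 → f t = 0 := by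
  have hI : MeasurableSet (Icc (0 : ℝ) (T - s)) := measurableSet_Icc
  have hqmp := (measurePreserving_add_left (volume : Measure ℝ) s).quasiMeasurePreserving
  have hqmp' := (measurePreserving_add_left (volume : Measure ℝ) (-s)).quasiMeasurePreserving
  have hs' : ∀ᵐ u, s + u ≤ s → f (s + u) = 0 := hqmp.ae hs
  have hh' : ∀ᵐ t, s + t < T → ∫ u, f u * g (s + t - u) = 0 := hqmp.ae hh
  have hfi : Integrable (fun u => f (s + u)) := hf.comp_add_left s
  have hmain : ∀ᵐ t, t < T - s → ∫ u, (Icc 0 (T - s)).indicator (fun u => f (s + u)) u *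
      (Icc 0 (T - s)).indicator g (t - u) = 0 := by
    filter_upwards [hh'] with t ht htlt
    refine Eq.trans ?_ (ht (by linarith))
    rw [← integral_add_left_eq_self (fun u => f u * g (s + t - u)) s]
    apply integral_congr_ae
    filter_upwards [hs'] with u hu
    have e : s + t - (s + u) = t - u := by ring
    simp only [e]
    by_cases hu0 : u < 0
    · rw [indicator_of_notMem (a := u) (fun h => by linarith [h.1]), hu (by linarith)]
      simp
    by_cases huT : T - s < u
    · rw [indicator_of_notMem (a := u) (fun h => by linarith [h.2]),
        hfs (s + u) (fun h => by linarith [h.2])]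
      simp
    rw [indicator_of_mem (a := u) (by constructor <;> linarith)]
    by_cases htu : t - u < 0
    · rw [indicator_of_notMem (a := t - u) (fun h => by linarith [h.1]),
        hgs (t - u) (fun h => by linarith [h.1])]
    · rw [indicator_of_mem (a := t - u) (by constructor <;> linarith)]
  rcases titch_core (f := (Icc 0 (T - s)).indicator fun u => f (s + u))
    (g := (Icc 0 (T - s)).indicator g) (hfi.indicator hI) (hg.indicator hI) (T := T - s)
    (by linarith) (fun t ht => indicator_of_notMem ht _) (fun t ht => indicator_of_notMem ht _) hmain
    with h | h
  · have h2 := hqmp'.ae h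
    filter_upwards [h2, hs] with t ht hst htle
    by_cases h1 : t ≤ s
    · exact hst h1
    by_cases h3 : t ≤ T
    · have := ht (by linarith)
      rw [indicator_of_mem (by constructor <;> linarith)] at this
      simpa using this
    · exact hfs t fun h => h3 h.2
  · exfalso
    refine hnt ((T - s) / 4) (by linarith) ?_
    filter_upwards [h] with t ht hle
    by_cases h0 : 0 ≤ t
    · have := ht hle
      rwa [indicator_of_mem (by constructor <;> linarith)] at this
    · exact hgs t fun h => h0 h.1

lemma titch_iter {f g : ℝ → ℝ} (hf : Integrable f) (hg : Integrable g) {T : ℝ} (hT : 0 < T)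
    (hfs : ∀ t, t ∉ Icc 0 T → f t = 0) (hgs : ∀ t, t ∉ Icc 0 T → g t = 0)
    (hh : ∀ᵐ t, t < T → ∫ u, f u * g (t - u) = 0)
    (hnt : ∀ ε > 0, ¬ ∀ᵐ t, t ≤ ε → g t = 0) : ∀ᵐ t, f t = 0 := by
  have hne : ∀ c : ℝ, ∀ᵐ t : ℝ, t ≠ c := fun c => by simp [ae_iff]
  have key : ∀ n : ℕ, ∀ᵐ t, t ≤ T * (1 - (3 / 4 : ℝ) ^ n) → f t = 0 := by
    intro n
    induction n with
    | zero =>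
      filter_upwards [hne 0] with t ht hle
      simp at hle
      exact hfs t fun h => ht (le_antisymm hle h.1)
    | succ n ih =>
      have h1 : (0 : ℝ) < (3 / 4 : ℝ) ^ n := by positivity
      have h2 : (3 / 4 : ℝ) ^ n ≤ 1 := pow_le_one₀ (by norm_num) (by norm_num)
      have := titch_step hf hg hfs hgs hh hnt (s := T * (1 - (3 / 4 : ℝ) ^ n))
        (mul_nonneg hT.le (by linarith)) (by nlinarith) ih
      filter_upwards [this] with t ht hle
      apply ht
      refine hle.trans (le_of_eq ?_)
      ring
  filter_upwards [ae_all_iff.2 key, hne T] with t ht htT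
  rcases lt_or_gt_of_ne htT with h | h
  · obtain ⟨n, hn⟩ := exists_pow_lt_of_lt_one (y := (3 / 4 : ℝ)) (x := 1 - t / T)
      (by rw [sub_pos, div_lt_one hT]; exact h) (by norm_num)
    apply ht n
    have : t / T ≤ 1 - (3 / 4 : ℝ) ^ n := by linarith
    rw [div_le_iff₀ hT] at this
    linarith
  · exact hfs t fun h' => by linarith [h'.2]

lemma titch_convOp_eq {a b : ℝ} (g f : ℝ → ℝ) {t : ℝ} (ht0 : 0 ≤ t) (htb : t ≤ b - a) :
    ∫ u, (Icc 0 (b - a)).indicator (fun u => f (a + u)) u *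
      (Icc 0 (b - a)).indicator (fun u => g (a + u)) (t - u) = convOp a g f (a + t) := by
  unfold convOp
  have h := intervalIntegral.integral_comp_add_left (a := 0) (b := t)
    (fun s => g (a + t - s + a) * f s) a
  rw [add_zero] at h
  rw [← h, intervalIntegral.integral_of_le ht0, ← integral_Icc_eq_integral_Ioc,
    ← integral_indicator measurableSet_Icc]
  congr 1
  ext u
  have e : a + t - (a + u) + a = a + (t - u) := by ring
  by_cases hu : u ∈ Icc 0 t
  · rw [indicator_of_mem hu, indicator_of_mem (show u ∈ Icc 0 (b - a) from ⟨hu.1, hu.2.trans htb⟩),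
      indicator_of_mem (by constructor <;> linarith [hu.1, hu.2]), e, mul_comm]
  · rw [indicator_of_notMem hu]
    by_cases h0 : 0 ≤ u
    · have : t < u := by
        by_contra h
        exact hu ⟨h0, not_lt.1 h⟩
      rw [indicator_of_notMem (a := t - u) (fun h => by linarith [h.1]), mul_zero]
    · rw [indicator_of_notMem (a := u) (fun h => h0 h.1), zero_mul]

lemma titch_shift_integrable {a b : ℝ} {f : ℝ → ℝ} (hf : IntegrableOn f (Icc a b)) :
    Integrable ((Icc 0 (b - a)).indicator (fun u => f (a + u))) := by
  have h := (hf.integrable_indicator measurableSet_Icc).comp_add_left a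
  convert h using 1
  ext u
  by_cases hu : u ∈ Icc 0 (b - a)
  · rw [indicator_of_mem hu, indicator_of_mem (by constructor <;> linarith [hu.1, hu.2])]
  · rw [indicator_of_notMem hu, indicator_of_notMem]
    intro h
    exact hu ⟨by linarith [h.1], by linarith [h.2]⟩

theorem convOp_injective (a b : ℝ) (hab : a ≤ b) (g : ℝ → ℝ)
    (hg : IntegrableOn g (Icc a b))
    (hnontriv : ∀ ε > 0, ¬ (∀ᵐ t ∂(volume.restrict (Icc a (a + ε))), g t = 0))
    (f₁ f₂ : ℝ → ℝ) (hf₁ : IntegrableOn f₁ (Icc a b)) (hf₂ : IntegrableOn f₂ (Icc a b))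
    (heq : ∀ᵐ t ∂(volume.restrict (Icc a b)), convOp a g f₁ t = convOp a g f₂ t) :
    ∀ᵐ t ∂(volume.restrict (Icc a b)), f₁ t = f₂ t := by
  rcases hab.eq_or_lt with rfl | hab'
  · simp
  have hT : 0 < b - a := sub_pos.2 hab'
  rw [ae_restrict_iff' measurableSet_Icc] at heq ⊢
  have hqmp := (measurePreserving_add_left (volume : Measure ℝ) a).quasiMeasurePreserving
  have hqmp' := (measurePreserving_add_left (volume : Measure ℝ) (-a)).quasiMeasurePreserving
  have hF₁ := titch_shift_integrable hf₁
  have hF₂ := titch_shift_integrable hf₂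
  have hG := titch_shift_integrable hg
  have heq' := hqmp.ae heq
  have hc₁ := hF₁.ae_convolution_exists (ContinuousLinearMap.mul ℝ ℝ) hG
  have hc₂ := hF₂.ae_convolution_exists (ContinuousLinearMap.mul ℝ ℝ) hG
  have main := titch_iter (hF₁.sub hF₂) hG hT
    (fun t ht => by simp only [Pi.sub_apply, indicator_of_notMem ht, sub_zero])
    (fun t ht => indicator_of_notMem ht _) ?_ ?_
  · filter_upwards [hqmp'.ae main] with t ht hmem
    have hm : -a + t ∈ Icc 0 (b - a) := by constructor <;> linarith [hmem.1, hmem.2]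
    simp only [Pi.sub_apply, indicator_of_mem hm, add_neg_cancel_left] at ht
    linarith
  · filter_upwards [heq', hc₁, hc₂] with t ht h₁ h₂ htT
    by_cases h0 : 0 ≤ t
    · have e := ht (by constructor <;> linarith)
      rw [← titch_convOp_eq g f₁ h0 htT.le, ← titch_convOp_eq g f₂ h0 htT.le] at e
      simp only [Pi.sub_apply, sub_mul]
      have := integral_sub h₁ h₂
      simp only [ContinuousLinearMap.mul_apply'] at this
      rw [this, e, sub_self]
    · refine integral_eq_zero_of_ae (Filter.Eventually.of_forall fun u => ?_)
      simp only [Pi.zero_apply]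
      by_cases hu : 0 ≤ u
      · rw [indicator_of_notMem (a := t - u) (fun h => by linarith [h.1]), mul_zero]
      · rw [Pi.sub_apply, indicator_of_notMem (a := u) (fun h => hu h.1),
          indicator_of_notMem (a := u) (fun h => hu h.1), sub_self, zero_mul]
  · intro ε hε hcon
    refine hnontriv (min ε (b - a)) (lt_min hε hT) ?_
    rw [ae_restrict_iff' measurableSet_Icc]
    filter_upwards [hqmp'.ae hcon] with t ht hmem
    have h1 := min_le_left ε (b - a)
    have h2 := min_le_right ε (b - a)
    have h3 := ht (by linarith [hmem.2])
    rw [indicator_of_mem (by constructor <;> linarith [hmem.1, hmem.2])] at h3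
    simpa using h3
end

section
/- Suppose a family (J^α)_{α>0} of bounded linear operators on L¹[a,b] satisfies: (1) J¹ is the ordinary integral operator (J¹f)(t) = ∫_a^t f(s) ds; (2) the index law J^α ∘ J^β = J^{α+β} for all α,β > 0; (3) α ↦ J^α is continuous from (0,∞) to B(L¹[a,b]) with the operator norm; and (4) each J^α is a convolution operator, i.e., J^α = C_a(k_α) for some kernel k_α ∈ L¹[a,b]. Then J^α = I_{a⁺}^{α} for all α > 0, i.e., the family is the Riemann–Liouville fractional integral. -/
open MeasureTheory Set

/-- Riemann–Liouville fractional integral of order `α` with base point `a`. -/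
noncomputable def RL (a α : ℝ) (f : ℝ → ℝ) (t : ℝ) : ℝ :=
  ∫ s in a..t, (t - s) ^ (α - 1) / Real.Gamma α * f s

open Filter Topology Asymptotics

/-- Injectivity of the Fourier transform for real integrable functions. -/
lemma ae_zero_of_fourier (μ : Measure ℝ) [SFinite μ] (g : ℝ → ℝ) (hg : Integrable g μ)
    (h : ∀ y : ℝ, ∫ t, Complex.exp (y * t * Complex.I) * (g t : ℂ) ∂μ = 0) :
    ∀ᵐ t ∂μ, g t = 0 := by
  have hm : AEMeasurable g μ := hg.aemeasurable
  set p : ℝ → ENNReal := fun t => ENNReal.ofReal (g t)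
  set q : ℝ → ENNReal := fun t => ENNReal.ofReal (-g t)
  have hp : ∫⁻ t, p t ∂μ ≠ ⊤ := (hg.lintegral_lt_top).ne
  have hq : ∫⁻ t, q t ∂μ ≠ ⊤ := (hg.neg.lintegral_lt_top).ne
  have hpm : AEMeasurable p μ := hm.ennreal_ofReal
  have hqm : AEMeasurable q μ := hm.neg.ennreal_ofReal
  have : IsFiniteMeasure (μ.withDensity p) := isFiniteMeasure_withDensity hp
  have : IsFiniteMeasure (μ.withDensity q) := isFiniteMeasure_withDensity hq
  have hbd : ∀ (y : ℝ) (f : ℝ → ℝ), Integrable f μ →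
      Integrable (fun t : ℝ => Complex.exp (y * t * Complex.I) * (f t : ℂ)) μ := by
    intro y f hf
    refine hf.ofReal.bdd_mul (c := 1) (by fun_prop) (Eventually.of_forall fun t => ?_)
    rw [← Complex.ofReal_mul, Complex.norm_exp_ofReal_mul_I]
  have key : μ.withDensity p = μ.withDensity q := by
    refine Measure.ext_of_charFun ?_
    ext y
    rw [charFun_apply_real, charFun_apply_real,
      integral_withDensity_eq_integral_toReal_smul₀ hpm (Eventually.of_forall fun t => by simp [p]),
      integral_withDensity_eq_integral_toReal_smul₀ hqm (Eventually.of_forall fun t => by simp [q]),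
      ← sub_eq_zero, ← h y, ← integral_sub]
    · refine integral_congr_ae (Eventually.of_forall fun t => ?_)
      simp only [p, q, ENNReal.toReal_ofReal', Complex.real_smul]
      rw [← sub_mul, ← Complex.ofReal_sub, mul_comm]
      congr 2
      rcases le_total 0 (g t) with h0 | h0
      · rw [max_eq_left h0, max_eq_right (by linarith)]; ring
      · rw [max_eq_right h0, max_eq_left (by linarith)]; ring
    · have := hbd y _ hg.pos_part
      refine this.congr (Eventually.of_forall fun t => ?_)
      simp only [p, ENNReal.toReal_ofReal', Complex.real_smul, mul_comm]
    · have := hbd y _ hg.neg_part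
      refine this.congr (Eventually.of_forall fun t => ?_)
      simp only [q, ENNReal.toReal_ofReal', Complex.real_smul, mul_comm]
  have := (withDensity_eq_iff hpm hqm hp).1 key
  filter_upwards [this] with t ht
  simp only [p, q] at ht
  rcases lt_trichotomy (g t) 0 with h0 | h0 | h0
  · rw [ENNReal.ofReal_of_nonpos h0.le] at ht
    have := ENNReal.ofReal_eq_zero.1 ht.symm
    linarith
  · exact h0
  · rw [ENNReal.ofReal_of_nonpos (p := - g t) (by linarith)] at ht
    have := ENNReal.ofReal_eq_zero.1 ht
    linarith

/-- Truncated Laplace transform. -/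
noncomputable def LTr (T : ℝ) (g : ℝ → ℝ) (x : ℝ) : ℝ :=
  ∫ t in Ioc 0 T, Real.exp (-(x * t)) * g t

/-- Negligible functions. -/
def Negl (T : ℝ) (F : ℝ → ℝ) : Prop :=
  ∀ ε > 0, F =O[atTop] fun x => Real.exp (-((T - ε) * x))

lemma ae_zero_of_LTr (T : ℝ) (g : ℝ → ℝ) (hg : IntegrableOn g (Ioc 0 T))
    (h : Negl T (LTr T g)) : ∀ᵐ t ∂(volume.restrict (Ioc 0 T)), g t = 0 := by
  set μ := volume.restrict (Ioc (0:ℝ) T) with hμ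
  set G : ℂ → ℂ := fun z => ∫ t, Complex.exp (z * (T - t)) * (g t : ℂ) ∂μ with hG
  set M : ℝ := ∫ t, |g t| ∂μ with hM
  have hM0 : 0 ≤ M := integral_nonneg fun t => abs_nonneg _
  have hmem : ∀ᵐ t ∂μ, t ∈ Ioc 0 T := ae_restrict_mem measurableSet_Ioc
  have hnorm : ∀ (z : ℂ) (t : ℝ), ‖Complex.exp (z * (T - t))‖ = Real.exp (z.re * (T - t)) := by
    intro z t
    rw [Complex.norm_exp, ← Complex.ofReal_sub, Complex.re_mul_ofReal]
  have hbound : ∀ (z : ℂ) (B : ℝ), (∀ t ∈ Ioc 0 T, z.re * (T - t) ≤ B) →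
      ‖G z‖ ≤ Real.exp B * M := by
    intro z B hB
    rw [hM, ← integral_const_mul]
    refine norm_integral_le_of_norm_le (hg.abs.const_mul _) ?_
    filter_upwards [hmem] with t ht
    rw [norm_mul, hnorm, Complex.norm_real, Real.norm_eq_abs]
    gcongr
    exact hB t ht
  have hleft : ∀ z : ℂ, z.re ≤ 0 → ‖G z‖ ≤ M := by
    intro z hz
    simpa using hbound z 0 fun t ht => mul_nonpos_of_nonpos_of_nonneg hz (by linarith [ht.2])
  have hdiff : Differentiable ℂ G := by
    intro z₀
    have hmeas : ∀ z : ℂ, AEStronglyMeasurable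
        (fun t : ℝ => Complex.exp (z * (T - t)) * (g t : ℂ)) μ := by
      intro z
      exact AEStronglyMeasurable.mul (by fun_prop) hg.ofReal.aestronglyMeasurable
    have := (hasDerivAt_integral_of_dominated_loc_of_deriv_le (μ := μ) (𝕜 := ℂ) (x₀ := z₀)
      (s := Metric.ball z₀ 1)
      (F := fun z t => Complex.exp (z * (T - t)) * (g t : ℂ))
      (F' := fun z t => (T - t) * (Complex.exp (z * (T - t)) * (g t : ℂ)))
      (bound := fun t => T * Real.exp ((‖z₀‖ + 1) * T) * |g t|)
      (Metric.ball_mem_nhds z₀ one_pos) (Eventually.of_forall hmeas) ?_ ?_ ?_ ?_ ?_).2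
    · exact this.differentiableAt
    · refine (hg.abs.const_mul (Real.exp (‖z₀‖ * T))).mono' (hmeas z₀) ?_
      filter_upwards [hmem] with t ht
      rw [norm_mul, hnorm, Complex.norm_real, Real.norm_eq_abs]
      gcongr
      · linarith [ht.2]
      · exact Complex.re_le_norm z₀
      · linarith [ht.1]
    · exact AEStronglyMeasurable.mul (by fun_prop) (hmeas z₀)
    · filter_upwards [hmem] with t ht z hz
      rw [norm_mul, norm_mul, hnorm, Complex.norm_real, Real.norm_eq_abs,
        ← Complex.ofReal_sub, Complex.norm_real, Real.norm_eq_abs, abs_of_nonneg (by linarith [ht.2]),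
        ← mul_assoc]
      have h1 : z.re ≤ ‖z₀‖ + 1 := by
        have h2 : ‖z - z₀‖ < 1 := by simpa [dist_eq_norm] using hz
        have h3 := norm_le_norm_add_norm_sub' z z₀
        linarith [Complex.re_le_norm z]
      have : T - t ≤ T := by linarith [ht.1]
      have : 0 ≤ T - t := by linarith [ht.2]
      have : 0 ≤ T := by linarith
      gcongr
    · exact hg.abs.const_mul _
    · refine Eventually.of_forall fun t z _ => ?_
      have h1 : HasDerivAt (fun z : ℂ => z * ((T : ℂ) - t)) ((T : ℂ) - t) z := by
        simpa using (hasDerivAt_id z).mul_const ((T : ℂ) - t)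
      refine (h1.cexp.mul_const (g t : ℂ)).congr_deriv ?_
      ring
  have hreal : ∀ x : ℝ, G x = ((Real.exp (x * T) * LTr T g x : ℝ) : ℂ) := by
    intro x
    simp only [hG, LTr]
    rw [← integral_const_mul, ← integral_complex_ofReal]
    refine integral_congr_ae (Eventually.of_forall fun t => ?_)
    simp only
    rw [← mul_assoc, ← Real.exp_add]
    push_cast
    congr 2
    ring
  have hright : ∀ z : ℂ, 0 ≤ z.re → ‖G z‖ ≤ M := by
    intro z hz
    have key : ∀ ε : ℝ, 0 < ε → ‖Complex.exp (-(ε * z)) * G z‖ ≤ M := by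
      intro ε hε
      refine PhragmenLindelof.right_half_plane_of_bounded_on_real
        (f := fun z => Complex.exp (-(ε * z)) * G z) ?_ ?_ ?_ ?_ hz
      · refine Differentiable.diffContOnCl ?_
        exact Differentiable.mul (by fun_prop) hdiff
      · refine ⟨1, by norm_num, |T|, ?_⟩
        refine IsBigO.of_bound M ?_
        rw [eventually_inf_principal]
        refine Eventually.of_forall fun w hw => ?_
        have hw : 0 < w.re := hw
        rw [norm_mul, Complex.norm_exp, Real.rpow_one, Real.norm_eq_abs, Real.abs_exp]
        have h1 : Real.exp (-(ε * w)).re ≤ 1 := by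
          rw [Real.exp_le_one_iff]
          simp
          positivity
        have h2 := hbound w (|T| * ‖w‖) (fun t ht => by
          rw [mul_comm |T|]
          refine mul_le_mul (Complex.re_le_norm w) ?_ (by linarith [ht.2]) (norm_nonneg _)
          linarith [le_abs_self T, ht.1])
        calc _ ≤ 1 * (Real.exp (|T| * ‖w‖) * M) := by gcongr
          _ = _ := by ring
      · obtain ⟨C, hC⟩ := (h ε hε).bound
        refine ⟨C, ?_⟩
        rw [eventually_map]
        filter_upwards [hC] with x hx
        rw [norm_mul, hreal, Complex.norm_exp, Complex.norm_real, norm_mul, Real.norm_eq_abs (Real.exp _),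
          Real.abs_exp]
        rw [Real.norm_eq_abs (Real.exp _), Real.abs_exp] at hx
        calc _ ≤ Real.exp (-(ε * x : ℂ)).re * (Real.exp (x * T) * (C * Real.exp (-((T - ε) * x)))) := by
              gcongr
          _ = C * (Real.exp (-(ε * x)) * Real.exp (x * T) * Real.exp (-((T - ε) * x))) := by
              rw [show (-(ε * x : ℂ)).re = -(ε * x) by simp]
              ring
          _ = C := by
              rw [← Real.exp_add, ← Real.exp_add]
              ring_nf
              simp
      · intro x
        rw [norm_mul, Complex.norm_exp]
        have : (-(ε * (x * Complex.I))).re = 0 := by simp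
        rw [this, Real.exp_zero, one_mul]
        exact hleft _ (by simp)
    have hlim : Tendsto (fun ε : ℝ => ‖Complex.exp (-(ε * z)) * G z‖) (𝓝[>] 0) (𝓝 ‖G z‖) := by
      refine Tendsto.mono_left ?_ nhdsWithin_le_nhds
      exact Continuous.tendsto' (by fun_prop) _ _ (by simp)
    refine le_of_tendsto hlim ?_
    filter_upwards [self_mem_nhdsWithin] with ε hε using key ε hε
  have hconst : ∀ z w, G z = G w := by
    refine hdiff.apply_eq_apply_of_bounded ?_
    rw [isBounded_iff_forall_norm_le]
    refine ⟨M, ?_⟩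
    rintro _ ⟨z, rfl⟩
    rcases le_total 0 z.re with hz | hz
    · exact hright z hz
    · exact hleft z hz
  have hlim : Tendsto (fun n : ℕ => G (-(n : ℂ))) atTop (𝓝 0) := by
    have h0 : (0 : ℂ) = ∫ t, (0 : ℂ) ∂μ := by simp
    rw [h0]
    refine tendsto_integral_of_dominated_convergence (fun t => |g t|) ?_ hg.abs ?_ ?_
    · intro n
      exact AEStronglyMeasurable.mul (by fun_prop) hg.ofReal.aestronglyMeasurable
    · intro n
      filter_upwards [hmem] with t ht
      rw [norm_mul, hnorm, Complex.norm_real, Real.norm_eq_abs]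
      refine mul_le_of_le_one_left (abs_nonneg _) ?_
      rw [Real.exp_le_one_iff]
      simp only [Complex.neg_re, Complex.natCast_re, neg_mul, Left.neg_nonpos_iff]
      have : 0 ≤ T - t := by linarith [ht.2]
      positivity
    · have hne : ∀ᵐ t ∂μ, t ≠ T := by
        refine ae_restrict_of_ae ?_
        simp [ae_iff]
      filter_upwards [hmem, hne] with t ht hne
      have hpos : 0 < T - t := by
        rcases lt_or_eq_of_le ht.2 with h | h
        · linarith
        · exact absurd h hne
      rw [tendsto_zero_iff_norm_tendsto_zero]
      have h1 : Tendsto (fun n : ℕ => Real.exp (-((n:ℝ) * (T - t))) * |g t|) atTop (𝓝 (0 * |g t|)) := by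
        refine Tendsto.mul_const _ ?_
        refine Real.tendsto_exp_neg_atTop_nhds_zero.comp ?_
        exact tendsto_natCast_atTop_atTop.atTop_mul_const hpos
      rw [zero_mul] at h1
      refine h1.congr fun n => ?_
      rw [norm_mul, hnorm, Complex.norm_real, Real.norm_eq_abs]
      simp
  have hzero : ∀ z, G z = 0 := by
    intro z
    refine tendsto_nhds_unique ?_ hlim
    exact tendsto_const_nhds.congr fun n => hconst _ _
  refine ae_zero_of_fourier μ g hg fun y => ?_
  have h1 := hzero (-(y * Complex.I))
  have h2 : G (-(y * Complex.I)) = Complex.exp (-(y * Complex.I) * T) *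
      ∫ t, Complex.exp (y * t * Complex.I) * (g t : ℂ) ∂μ := by
    rw [← integral_const_mul]
    refine integral_congr_ae (Eventually.of_forall fun t => ?_)
    simp only
    rw [← mul_assoc, ← Complex.exp_add]
    congr 2
    ring
  rw [h2] at h1
  exact (mul_eq_zero.1 h1).resolve_left (Complex.exp_ne_zero _)

/-- Subexponential functions. -/
def Sube (F : ℝ → ℝ) : Prop := ∀ ε > 0, F =O[atTop] fun x => Real.exp (ε * x)

/-- Equality up to negligible functions. -/
def Eqv (T : ℝ) (F G : ℝ → ℝ) : Prop := Negl T (fun x => F x - G x)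

lemma Negl.mul_sube {T : ℝ} {F G : ℝ → ℝ} (hF : Negl T F) (hG : Sube G) :
    Negl T (fun x => F x * G x) := by
  intro ε hε
  refine ((hF (ε / 2) (by positivity)).mul (hG (ε / 2) (by positivity))).congr_right fun x => ?_
  rw [← Real.exp_add]
  ring_nf

lemma Eqv.symm {T : ℝ} {F G : ℝ → ℝ} (h : Eqv T F G) : Eqv T G F := by
  intro ε hε
  exact (h ε hε).neg_left.congr_left fun x => by simp

lemma Eqv.trans {T : ℝ} {F G H : ℝ → ℝ} (h : Eqv T F G) (h' : Eqv T G H) : Eqv T F H := by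
  intro ε hε
  exact ((h ε hε).add (h' ε hε)).congr_left fun x => by ring

lemma Eqv.mul {T : ℝ} {F F' G G' : ℝ → ℝ} (h : Eqv T F F') (h' : Eqv T G G')
    (hF' : Sube F') (hG : Sube G) : Eqv T (fun x => F x * G x) (fun x => F' x * G' x) := by
  intro ε hε
  exact (((Negl.mul_sube h hG) ε hε).add ((Negl.mul_sube h' hF') ε hε)).congr_left fun x => by ring

lemma Eqv.of_eventuallyEq {T : ℝ} {F G : ℝ → ℝ} (h : F =ᶠ[atTop] G) : Eqv T F G := by
  intro ε hε
  refine (isBigO_zero _ _).congr' ?_ EventuallyEq.rfl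
  filter_upwards [h] with x hx
  simp [hx]

lemma Eqv.refl {T : ℝ} (F : ℝ → ℝ) : Eqv T F F := Eqv.of_eventuallyEq EventuallyEq.rfl

lemma negl_of_bound {T C : ℝ} {F : ℝ → ℝ} (h : ∀ x ≥ 1, |F x| ≤ C * Real.exp (-(T * x))) :
    Negl T F := by
  intro ε hε
  have h1 : F =O[atTop] fun x => Real.exp (-(T * x)) := by
    refine IsBigO.of_bound C ?_
    filter_upwards [eventually_ge_atTop 1] with x hx
    simpa using h x hx
  refine h1.trans (IsBigO.of_bound 1 ?_)
  filter_upwards [eventually_ge_atTop 0] with x hx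
  rw [one_mul, Real.norm_eq_abs, Real.norm_eq_abs, Real.abs_exp, Real.abs_exp, Real.exp_le_exp]
  nlinarith

lemma sube_rpow (s : ℝ) : Sube (fun x => x ^ s) := fun _ hε =>
  (isLittleO_rpow_exp_pos_mul_atTop s hε).isBigO

lemma sube_of_bound {C : ℝ} {F : ℝ → ℝ} (h : ∀ x ≥ 1, |F x| ≤ C) : Sube F := by
  intro ε hε
  have h1 : F =O[atTop] fun _ => (1 : ℝ) := by
    refine IsBigO.of_bound C ?_
    filter_upwards [eventually_ge_atTop 1] with x hx
    simpa using h x hx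
  refine h1.trans (IsBigO.of_bound 1 ?_)
  filter_upwards [eventually_ge_atTop 0] with x hx
  rw [one_mul, Real.norm_eq_abs, Real.norm_eq_abs, Real.abs_exp, abs_one]
  exact Real.one_le_exp (by positivity)

lemma exp_mul_integrableOn {S : Set ℝ} (hS : MeasurableSet S) (hS0 : S ⊆ Ici 0) {g : ℝ → ℝ}
    (hg : IntegrableOn g S) {x : ℝ} (hx : 0 ≤ x) :
    IntegrableOn (fun t => Real.exp (-(x * t)) * g t) S := by
  refine Integrable.mono' hg.abs
    (AEStronglyMeasurable.mul (by fun_prop) hg.aestronglyMeasurable) ?_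
  filter_upwards [ae_restrict_mem hS] with t ht
  have ht0 : 0 ≤ t := hS0 ht
  rw [norm_mul, Real.norm_eq_abs, Real.norm_eq_abs, Real.abs_exp]
  refine mul_le_of_le_one_left (abs_nonneg _) ?_
  rw [Real.exp_le_one_iff]
  have := mul_nonneg hx ht0
  linarith

lemma sube_LTr {T : ℝ} {g : ℝ → ℝ} (hg : IntegrableOn g (Ioc 0 T)) : Sube (LTr T g) := by
  refine sube_of_bound (C := ∫ t in Ioc 0 T, |g t|) fun x hx => ?_
  rw [LTr, ← Real.norm_eq_abs]
  refine norm_integral_le_of_norm_le hg.abs ?_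
  filter_upwards [ae_restrict_mem measurableSet_Ioc] with t ht
  rw [norm_mul, Real.norm_eq_abs, Real.norm_eq_abs, Real.abs_exp]
  refine mul_le_of_le_one_left (abs_nonneg _) ?_
  rw [Real.exp_le_one_iff]
  have : 0 ≤ x * t := mul_nonneg (by linarith) ht.1.le
  linarith

lemma LTr_congr {T : ℝ} {f g : ℝ → ℝ} (h : ∀ᵐ t ∂(volume.restrict (Ioc 0 T)), f t = g t) :
    LTr T f = LTr T g := by
  ext x
  refine integral_congr_ae ?_
  filter_upwards [h] with t ht
  simp only [ht]

lemma tail_bound {T : ℝ} (hT : 0 < T) {W : ℝ → ℝ} (hW : IntegrableOn W (Ioi T)) {x : ℝ}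
    (hx : 0 ≤ x) : |∫ t in Ioi T, Real.exp (-(x * t)) * W t| ≤
      (∫ t in Ioi T, |W t|) * Real.exp (-(T * x)) := by
  rw [mul_comm, ← integral_const_mul, ← Real.norm_eq_abs]
  refine norm_integral_le_of_norm_le (hW.abs.const_mul _) ?_
  filter_upwards [ae_restrict_mem measurableSet_Ioi] with t ht
  have ht : T < t := ht
  rw [norm_mul, Real.norm_eq_abs, Real.norm_eq_abs, Real.abs_exp, mul_comm T x]
  gcongr

lemma LTr_mul {T : ℝ} (hT : 0 < T) {f g c : ℝ → ℝ} (hf : IntegrableOn f (Ioc 0 T))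
    (hg : IntegrableOn g (Ioc 0 T))
    (hc : ∀ᵐ t ∂(volume.restrict (Ioc 0 T)), c t = ∫ s in (0:ℝ)..t, f (t - s) * g s) :
    Eqv T (fun x => LTr T f x * LTr T g x) (LTr T c) := by
  set F := indicator (Ioc 0 T) f with hF
  set G := indicator (Ioc 0 T) g with hG
  have hFi : Integrable F := (integrable_indicator_iff measurableSet_Ioc).2 hf
  have hGi : Integrable G := (integrable_indicator_iff measurableSet_Ioc).2 hg
  set W : ℝ → ℝ := fun t => ∫ s in (0:ℝ)..t, G s * F (t - s) with hW
  have hWi : IntegrableOn W (Ioi 0) := by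
    have := integrable_posConvolution (f := G) (g := F) (μ := volume) (ν := volume)
      hGi.integrableOn hFi.integrableOn (ContinuousLinearMap.mul ℝ ℝ)
    rw [posConvolution, integrable_indicator_iff measurableSet_Ioi] at this
    exact this
  have hWc : ∀ᵐ t ∂(volume.restrict (Ioc 0 T)), c t = W t := by
    filter_upwards [hc, ae_restrict_mem measurableSet_Ioc] with t h1 ht
    rw [h1, hW]
    simp only
    rw [intervalIntegral.integral_of_le ht.1.le, intervalIntegral.integral_of_le ht.1.le,
      integral_Ioc_eq_integral_Ioo, integral_Ioc_eq_integral_Ioo]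
    refine setIntegral_congr_fun measurableSet_Ioo fun s hs => ?_
    have e1 : s ∈ Ioc 0 T := ⟨hs.1, hs.2.le.trans ht.2⟩
    have e2 : t - s ∈ Ioc 0 T := ⟨by linarith [hs.2], by linarith [hs.1, ht.2]⟩
    simp only [hF, hG, indicator_of_mem e1, indicator_of_mem e2]
    ring
  have hind : ∀ (p : ℝ → ℝ) (x : ℝ), LTr T p x =
      ∫ t in Ioi 0, Real.exp (-(x * t)) * indicator (Ioc 0 T) p t := by
    intro p x
    rw [LTr, ← integral_indicator measurableSet_Ioc, ← integral_indicator measurableSet_Ioi]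
    congr 1
    ext t
    by_cases ht : t ∈ Ioc 0 T
    · rw [indicator_of_mem ht, indicator_of_mem (show t ∈ Ioi 0 from ht.1), indicator_of_mem ht]
    · rw [indicator_of_notMem ht]
      by_cases h0 : t ∈ Ioi 0
      · rw [indicator_of_mem h0, indicator_of_notMem ht, mul_zero]
      · rw [indicator_of_notMem h0]
  refine negl_of_bound (C := ∫ t in Ioi T, |W t|) fun x hx => ?_
  have hx0 : 0 ≤ x := by linarith
  have hsub : Ioi (0:ℝ) ⊆ Ici 0 := Ioi_subset_Ici_self
  have hprod : LTr T f x * LTr T g x = ∫ t in Ioi 0, Real.exp (-(x * t)) * W t := by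
    have := integral_posConvolution (μ := volume) (ν := volume)
      (exp_mul_integrableOn measurableSet_Ioi hsub hGi.integrableOn hx0)
      (exp_mul_integrableOn measurableSet_Ioi hsub hFi.integrableOn hx0)
      (ContinuousLinearMap.mul ℝ ℝ)
    simp only [ContinuousLinearMap.mul_apply'] at this
    rw [hind f, hind g, mul_comm, ← this]
    refine setIntegral_congr_fun measurableSet_Ioi fun t ht => ?_
    simp only [hW]
    rw [← intervalIntegral.integral_const_mul]
    refine intervalIntegral.integral_congr fun s hs => ?_
    rw [show -(x * t) = -(x * s) + -(x * (t - s)) by ring, Real.exp_add]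
    ring
  have hWx := exp_mul_integrableOn measurableSet_Ioi hsub hWi hx0
  beta_reduce
  rw [hprod, LTr_congr hWc, ← Ioc_union_Ioi_eq_Ioi hT.le, setIntegral_union
    (Ioc_disjoint_Ioi le_rfl) measurableSet_Ioi (hWx.mono_set Ioc_subset_Ioi_self)
    (hWx.mono_set (Ioi_subset_Ioi hT.le)), LTr, add_sub_cancel_left]
  exact tail_bound hT (hWi.mono_set (Ioi_subset_Ioi hT.le)) hx0

/-- The Riemann-Liouville kernel. -/
noncomputable def hk (α t : ℝ) : ℝ := t ^ (α - 1) / Real.Gamma α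

lemma hk_integrableOn {α : ℝ} (hα : 0 < α) (T : ℝ) : IntegrableOn (hk α) (Ioc 0 T) := by
  rcases le_or_gt T 0 with hT | hT
  · simp [Ioc_eq_empty (not_lt.2 hT)]
  refine Integrable.div_const ?_ _
  have := intervalIntegral.intervalIntegrable_rpow' (a := 0) (b := T) (r := α - 1) (by linarith)
  exact (intervalIntegrable_iff_integrableOn_Ioc_of_le hT.le).1 this

lemma LTr_hk {α T : ℝ} (hα : 0 < α) (hT : 0 < T) : Eqv T (LTr T (hk α)) (fun x => x ^ (-α)) := by
  have hint : ∀ x : ℝ, 1 ≤ x → IntegrableOn (fun t => Real.exp (-(x * t)) * hk α t) (Ioi 0) := by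
    intro x hx
    have h1 : IntegrableOn (fun t => Real.exp (-(1 * t)) * hk α t) (Ioi 0) := by
      refine IntegrableOn.congr_fun ((Real.GammaIntegral_convergent hα).div_const (Real.Gamma α)) ?_
        measurableSet_Ioi
      intro t _
      simp only [hk, one_mul]
      ring
    have := exp_mul_integrableOn measurableSet_Ioi Ioi_subset_Ici_self h1
      (x := x - 1) (by linarith)
    refine this.congr_fun ?_ measurableSet_Ioi
    intro t _
    simp only
    rw [← mul_assoc, ← Real.exp_add]
    ring_nf
  have hfull : ∀ x : ℝ, 1 ≤ x → ∫ t in Ioi 0, Real.exp (-(x * t)) * hk α t = x ^ (-α) := by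
    intro x hx
    have hx0 : 0 < x := by linarith
    have h1 := Real.integral_rpow_mul_exp_neg_mul_Ioi hα hx0
    have hG : Real.Gamma α ≠ 0 := (Real.Gamma_pos_of_pos hα).ne'
    have : ∫ t in Ioi 0, Real.exp (-(x * t)) * hk α t =
        (∫ t in Ioi 0, t ^ (α - 1) * Real.exp (-(x * t))) / Real.Gamma α := by
      rw [← integral_div]
      refine setIntegral_congr_fun measurableSet_Ioi fun t _ => ?_
      simp only [hk]
      ring
    rw [this, h1, mul_div_assoc, div_self hG, mul_one, one_div, Real.inv_rpow hx0.le,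
      Real.rpow_neg hx0.le]
  refine negl_of_bound (C := (∫ t in Ioi T, |Real.exp (-(1 * t)) * hk α t|) * Real.exp T)
    fun x hx => ?_
  have hWx := hint x hx
  beta_reduce
  rw [← hfull x hx, ← Ioc_union_Ioi_eq_Ioi hT.le, setIntegral_union
    (Ioc_disjoint_Ioi le_rfl) measurableSet_Ioi (hWx.mono_set Ioc_subset_Ioi_self)
    (hWx.mono_set (Ioi_subset_Ioi hT.le)), LTr, sub_add_cancel_left, abs_neg]
  have := tail_bound hT ((hint 1 le_rfl).mono_set (Ioi_subset_Ioi hT.le)) (x := x - 1) (by linarith)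
  rw [mul_assoc, ← Real.exp_add, show T + -(T * x) = -(T * (x - 1)) by ring]
  have e : ∀ t : ℝ, Real.exp (-(x * t)) * hk α t =
      Real.exp (-((x - 1) * t)) * (Real.exp (-(1 * t)) * hk α t) := by
    intro t
    rw [← mul_assoc, ← Real.exp_add]
    ring_nf
  simp_rw [e]
  exact this

lemma sqrt_step {T β : ℝ} (hT : 0 < T) {K L : ℝ → ℝ}
    (h1 : Eqv T (fun x => K x * K x) (fun x => x ^ (-(β + β)))) (h2 : Eqv T K (fun x => L x * L x)) :
    Eqv T K (fun x => x ^ (-β)) := by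
  have hp : Negl T (fun x => (K x - x ^ (-β)) * (K x + x ^ (-β))) := by
    intro ε hε
    refine (h1 ε hε).congr' ?_ EventuallyEq.rfl
    filter_upwards [eventually_gt_atTop 0] with x hx
    rw [neg_add, Real.rpow_add hx]
    ring
  have hlow : ∀ᶠ x in atTop, x ^ (-β) / 2 ≤ K x + x ^ (-β) := by
    have hN := h2 (T / 2) (by positivity)
    have hl := isLittleO_exp_neg_mul_rpow_atTop (a := T / 2) (by positivity) (-β)
    have h3 : (fun x => K x - L x * L x) =o[atTop] fun x => x ^ (-β) :=
      (hN.congr_right (fun x => by ring_nf)).trans_isLittleO hl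
    filter_upwards [h3.bound (c := 1 / 2) (by norm_num), eventually_gt_atTop 0] with x hx hx0
    have hpos : 0 < x ^ (-β) := Real.rpow_pos_of_pos hx0 _
    rw [Real.norm_eq_abs, Real.norm_eq_abs, abs_of_pos hpos] at hx
    have := (abs_le.1 hx).1
    nlinarith [mul_self_nonneg (L x)]
  have hq := Negl.mul_sube hp (sube_rpow β)
  intro ε hε
  refine IsBigO.trans (IsBigO.of_bound 2 ?_) (hq ε hε)
  filter_upwards [hlow, eventually_gt_atTop 0] with x hx hx0
  have hpos : 0 < x ^ (-β) := Real.rpow_pos_of_pos hx0 _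
  have hpos' : 0 < x ^ β := Real.rpow_pos_of_pos hx0 _
  have hmul : x ^ (-β) * x ^ β = 1 := by rw [← Real.rpow_add hx0]; simp
  rw [norm_mul, norm_mul, Real.norm_of_nonneg (by linarith : 0 ≤ K x + x ^ (-β)),
    Real.norm_of_nonneg hpos'.le]
  have h4 : 1 ≤ 2 * ((K x + x ^ (-β)) * x ^ β) := by nlinarith
  nlinarith [norm_nonneg (K x - x ^ (-β))]

lemma ae_eq_of_LTr {T : ℝ} {f g : ℝ → ℝ} (hf : IntegrableOn f (Ioc 0 T))
    (hg : IntegrableOn g (Ioc 0 T)) (h : Eqv T (LTr T f) (LTr T g)) :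
    ∀ᵐ t ∂(volume.restrict (Ioc 0 T)), f t = g t := by
  have h1 : Negl T (LTr T (fun t => f t - g t)) := by
    intro ε hε
    refine (h ε hε).congr' ?_ EventuallyEq.rfl
    filter_upwards [eventually_ge_atTop 0] with x hx
    have hs : Ioc 0 T ⊆ Ici 0 := fun t ht => ht.1.le
    rw [LTr, LTr, LTr, ← integral_sub (exp_mul_integrableOn measurableSet_Ioc hs hf hx)
      (exp_mul_integrableOn measurableSet_Ioc hs hg hx)]
    refine integral_congr_ae (Eventually.of_forall fun t => ?_)
    simp only
    ring
  filter_upwards [ae_zero_of_LTr T _ (hf.sub hg) h1] with t ht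
  exact sub_eq_zero.1 ht

lemma abs_sub_int {μ : Measure ℝ} {f g : ℝ → ℝ} (hf : Integrable f μ) (hg : Integrable g μ) :
    Integrable (fun t => |f t - g t|) μ := (hf.sub hg).abs

lemma shift_mp (a b : ℝ) : MeasurePreserving (fun u : ℝ => u + a)
    (volume.restrict (Ioc 0 (b - a))) (volume.restrict (Icc a b)) := by
  have := (measurePreserving_add_right (volume : Measure ℝ) a).restrict_preimage_emb
    (measurableEmbedding_addRight a) (Ioc a b)
  rw [restrict_Ioc_eq_restrict_Icc] at this
  simpa using this

lemma shift_ae (a b : ℝ) (P : ℝ → Prop) : (∀ᵐ t ∂(volume.restrict (Icc a b)), P t) ↔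
    ∀ᵐ u ∂(volume.restrict (Ioc 0 (b - a))), P (u + a) := by
  rw [← (shift_mp a b).map_eq]
  exact (measurableEmbedding_addRight a).ae_map_iff

lemma shift_int {a b : ℝ} {f : ℝ → ℝ} (hf : IntegrableOn f (Icc a b)) :
    IntegrableOn (fun u => f (u + a)) (Ioc 0 (b - a)) :=
  ((shift_mp a b).integrable_comp_emb (measurableEmbedding_addRight a)).2 hf

lemma convOp_shift (a : ℝ) (k f : ℝ → ℝ) (u : ℝ) :
    convOp a k f (u + a) = ∫ s in (0:ℝ)..u, k (u - s + a) * f (s + a) := by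
  have := intervalIntegral.integral_comp_add_right (a := 0) (b := u)
    (fun s => k (u + a - s + a) * f s) a
  rw [zero_add] at this
  rw [convOp, ← this]
  refine intervalIntegral.integral_congr fun s _ => ?_
  beta_reduce
  rw [show u + a - (s + a) = u - s by ring]

lemma hk_cont {α : ℝ} (hα : 0 < α) : Continuous (hk (α + 1)) := by
  refine Continuous.div_const ?_ _
  exact continuous_id.rpow_const fun x => Or.inr (by linarith)

lemma dyadic_dense {α δ : ℝ} (hα : 0 < α) (hδ : 0 < δ) :
    ∃ m n : ℕ, |((m : ℝ) + 1) * (1 / 2) ^ n - α| < δ := by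
  obtain ⟨n, hn⟩ := exists_pow_lt_of_lt_one hδ (by norm_num : (1 / 2 : ℝ) < 1)
  refine ⟨⌊α * 2 ^ n⌋₊, n, ?_⟩
  have h1 := Nat.floor_le (a := α * 2 ^ n) (by positivity)
  have h2 := Nat.lt_floor_add_one (α * 2 ^ n)
  have h3 : (1 / 2 : ℝ) ^ n * 2 ^ n = 1 := by rw [← mul_pow]; norm_num
  have h4 : (0 : ℝ) < (1 / 2) ^ n := by positivity
  have e : α = α * 2 ^ n * (1 / 2) ^ n := by rw [mul_assoc, mul_comm (2 ^ n : ℝ), h3, mul_one]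
  rw [abs_lt]
  constructor
  · nlinarith
  · nlinarith

lemma hk_family_cont (a b c α : ℝ) (hα : 0 < α) (ε : ℝ) (hε : 0 < ε) :
    ∃ δ > 0, ∀ β > 0, |β - α| < δ →
      ∫ t in Icc a b, |c * hk (β + 1) (t - a) - c * hk (α + 1) (t - a)| < ε := by
  have hc : Continuous (fun β : Ioi (0:ℝ) =>
      ∫ t in Icc a b, |c * hk (β + 1) (t - a) - c * hk (α + 1) (t - a)|) := by
    have : LocallyCompactSpace (Ioi (0:ℝ)) := isOpen_Ioi.locallyCompactSpace
    refine continuous_parametric_integral_of_continuous ?_ isCompact_Icc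
    have h1 : Continuous (fun p : Ioi (0:ℝ) × ℝ => hk (p.1 + 1) (p.2 - a)) := by
      refine Continuous.div ?_ ?_ ?_
      · refine Continuous.rpow (by fun_prop) (by fun_prop) fun p => Or.inr ?_
        have : (0:ℝ) < p.1 := p.1.2
        linarith
      · rw [continuous_iff_continuousAt]
        intro p
        have hp : (0:ℝ) < p.1 := p.1.2
        have h2 : ContinuousAt Real.Gamma (p.1 + 1) := by
          refine (Real.differentiableAt_Gamma fun m => ?_).continuousAt
          have : (0:ℝ) ≤ m := m.cast_nonneg
          linarith
        exact ContinuousAt.comp (f := fun p : Ioi (0:ℝ) × ℝ => (p.1 : ℝ) + 1) h2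
          (by fun_prop)
      · intro p
        have hp : (0:ℝ) < p.1 := p.1.2
        exact (Real.Gamma_pos_of_pos (by linarith)).ne'
    have h2 := hk_cont hα
    simp only [Function.uncurry_def]
    fun_prop
  obtain ⟨δ, hδ, h⟩ := Metric.continuous_iff.1 hc ⟨α, hα⟩ ε hε
  refine ⟨δ, hδ, fun β hβ hd => ?_⟩
  have := h ⟨β, hβ⟩ (by simpa [Subtype.dist_eq, Real.dist_eq] using hd)
  simp only [sub_self, abs_zero, integral_zero, Real.dist_eq, sub_zero] at this
  exact (le_abs_self _).trans_lt this

/-- Cartwright–McMullen theorem (real, convolution-operator case): a family `(J^α)_{α>0}`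
of (bounded linear) convolution operators on `L¹[a,b]` that interpolates the ordinary
integral at `α = 1`, satisfies the index law, and depends continuously (in operator norm)
on `α`, must be the Riemann–Liouville family. -/
theorem cartwright_mcmullen_convolution (a b : ℝ) (hab : a < b)
    (J : ℝ → (ℝ → ℝ) → (ℝ → ℝ))
    -- each J^α maps L¹ to L¹
    (hmap : ∀ α > 0, ∀ f : ℝ → ℝ, IntegrableOn f (Icc a b) →
      IntegrableOn (J α f) (Icc a b))
    -- (1) interpolation: J¹ is the ordinary integral operator
    (hone : ∀ f : ℝ → ℝ, IntegrableOn f (Icc a b) →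
      ∀ᵐ t ∂(volume.restrict (Icc a b)), J 1 f t = ∫ s in a..t, f s)
    -- (2) index law
    (hindex : ∀ α > 0, ∀ β > 0, ∀ f : ℝ → ℝ, IntegrableOn f (Icc a b) →
      ∀ᵐ t ∂(volume.restrict (Icc a b)), J α (J β f) t = J (α + β) f t)
    -- (3) operator-norm continuity in α
    (hcont : ∀ α > 0, ∀ ε > 0, ∃ δ > 0, ∀ β > 0, |β - α| < δ →
      ∀ f : ℝ → ℝ, IntegrableOn f (Icc a b) → (∫ t in Icc a b, |f t|) ≤ 1 →
        (∫ t in Icc a b, |J β f t - J α f t|) ≤ ε)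
    -- (4) each J^α is a convolution operator with some L¹ kernel
    (hconv : ∀ α > 0, ∃ k : ℝ → ℝ, IntegrableOn k (Icc a b) ∧
      ∀ f : ℝ → ℝ, IntegrableOn f (Icc a b) →
        ∀ᵐ t ∂(volume.restrict (Icc a b)), J α f t = convOp a k f t) :
    ∀ α > 0, ∀ f : ℝ → ℝ, IntegrableOn f (Icc a b) →
      ∀ᵐ t ∂(volume.restrict (Icc a b)), J α f t = RL a α f t := by 
  have hT : 0 < b - a := by linarith
  set T := b - a with hTdef
  choose! k hkI hkE using hconv
  set K : ℝ → ℝ → ℝ := fun α => LTr T (fun u => k α (u + a)) with hK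
  have hKI : ∀ α > 0, IntegrableOn (fun u => k α (u + a)) (Ioc 0 T) :=
    fun α hα => shift_int (hkI α hα)
  have hKs : ∀ α > 0, Sube (K α) := fun α hα => sube_LTr (hKI α hα)
  have hop : ∀ α > 0, ∀ f : ℝ → ℝ, IntegrableOn f (Icc a b) →
      Eqv T (fun x => K α x * LTr T (fun u => f (u + a)) x) (LTr T (fun u => J α f (u + a))) := by
    intro α hα f hf
    refine LTr_mul hT (hKI α hα) (shift_int hf) ?_
    have := (shift_ae a b _).1 (hkE α hα f hf)
    filter_upwards [this] with u hu
    rw [hu, convOp_shift]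
  have hconst : ∀ c : ℝ, IntegrableOn (fun _ : ℝ => c) (Icc a b) := fun c => by simp
  set Φ : ℝ → ℝ → ℝ := fun α => LTr T (fun u => J α (fun _ => 1) (u + a)) with hΦ
  have hΦI : ∀ α > 0, IntegrableOn (fun u => J α (fun _ => 1) (u + a)) (Ioc 0 T) :=
    fun α hα => shift_int (hmap α hα _ (hconst 1))
  have hΦs : ∀ α > 0, Sube (Φ α) := fun α hα => sube_LTr (hΦI α hα)
  have hI : Eqv T (LTr T (fun _ => 1)) (fun x => x ^ (-1 : ℝ)) := by
    have : LTr T (fun _ => 1) = LTr T (hk 1) := by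
      congr 1
      ext t
      simp [hk]
    rw [this]
    exact LTr_hk one_pos hT
  have hIs : Sube (LTr T (fun _ => 1)) := sube_LTr (by simp)
  -- multiplication by powers
  have hpow : ∀ (F G : ℝ → ℝ) (s : ℝ), Eqv T F G →
      Eqv T (fun x => x ^ s * F x) (fun x => x ^ s * G x) := by
    intro F G s h ε hε
    exact (Negl.mul_sube h (sube_rpow s) ε hε).congr_left fun x => by ring
  have hKΦ : ∀ α > 0, Eqv T (K α) (fun x => x ^ (1 : ℝ) * Φ α x) := by
    intro α hα
    have h1 := hop α hα (fun _ => 1) (hconst 1)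
    have h2 : Eqv T (fun x => K α x * LTr T (fun _ => 1) x) (fun x => K α x * x ^ (-1 : ℝ)) :=
      Eqv.mul (Eqv.refl _) hI (hKs α hα) hIs
    refine Eqv.trans (Eqv.of_eventuallyEq ?_) (hpow _ _ 1 (h2.symm.trans h1))
    filter_upwards [eventually_gt_atTop 0] with x hx
    rw [mul_comm (K α x), ← mul_assoc, ← Real.rpow_add hx]
    simp
  have hΦadd : ∀ α > 0, ∀ β > 0, Eqv T (fun x => K α x * Φ β x) (Φ (α + β)) := by
    intro α hα β hβ
    have h1 := hop α hα (J β (fun _ => 1)) (hmap β hβ _ (hconst 1))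
    have h2 := (shift_ae a b _).1 (hindex α hα β hβ (fun _ => 1) (hconst 1))
    rw [LTr_congr h2] at h1
    exact h1
  have hKadd : ∀ α > 0, ∀ β > 0, Eqv T (fun x => K α x * K β x) (K (α + β)) := by
    intro α hα β hβ
    have h1 : Eqv T (fun x => K α x * K β x) (fun x => K α x * (x ^ (1 : ℝ) * Φ β x)) :=
      Eqv.mul (Eqv.refl _) (hKΦ β hβ) (hKs α hα) (hKs β hβ)
    refine h1.trans (Eqv.trans (Eqv.trans (Eqv.of_eventuallyEq ?_)
      (hpow _ _ 1 (hΦadd α hα β hβ))) (hKΦ _ (by positivity)).symm)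
    filter_upwards with x
    ring
  -- from `Φ` to `K` and back
  have hΦK : ∀ α > 0, Eqv T (Φ α) (fun x => x ^ (-(α + 1))) → Eqv T (K α) (fun x => x ^ (-α)) := by
    intro α hα h
    refine (hKΦ α hα).trans ((hpow _ _ 1 h).trans (Eqv.of_eventuallyEq ?_))
    filter_upwards [eventually_gt_atTop 0] with x hx
    rw [← Real.rpow_add hx]
    ring_nf
  have hKΦ' : ∀ α > 0, Eqv T (K α) (fun x => x ^ (-α)) → Eqv T (Φ α) (fun x => x ^ (-(α + 1))) := by
    intro α hα h
    have h1 := hpow _ _ (-1) ((hKΦ α hα).symm.trans h)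
    refine Eqv.trans (Eqv.of_eventuallyEq ?_) (h1.trans (Eqv.of_eventuallyEq ?_))
    · filter_upwards [eventually_gt_atTop 0] with x hx
      rw [← mul_assoc, ← Real.rpow_add hx]
      simp
    · filter_upwards [eventually_gt_atTop 0] with x hx
      rw [← Real.rpow_add hx]
      ring_nf
  have hK1 : Eqv T (K 1) (fun x => x ^ (-1 : ℝ)) := by
    refine hΦK 1 one_pos ?_
    have h2 : ∀ᵐ u ∂(volume.restrict (Ioc 0 T)), J 1 (fun _ => 1) (u + a) = hk (1 + 1) u := by
      filter_upwards [(shift_ae a b _).1 (hone (fun _ => 1) (hconst 1))] with u hu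
      rw [hu]
      simp [hk]
      norm_num
    simp only [hΦ]
    rw [LTr_congr h2]
    exact LTr_hk (by norm_num) hT
  have hdy : ∀ n : ℕ, Eqv T (K ((1 / 2) ^ n)) (fun x => x ^ (-((1 / 2 : ℝ) ^ n))) := by
    intro n
    induction n with
    | zero => simpa using hK1
    | succ n ih =>
      have hpos : (0:ℝ) < (1 / 2) ^ (n + 1) := by positivity
      have hpos2 : (0:ℝ) < (1 / 2) ^ (n + 2) := by positivity
      have e1 : (1 / 2 : ℝ) ^ (n + 1) + (1 / 2) ^ (n + 1) = (1 / 2) ^ n := by ring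
      have e2 : (1 / 2 : ℝ) ^ (n + 2) + (1 / 2) ^ (n + 2) = (1 / 2) ^ (n + 1) := by ring
      refine sqrt_step (L := K ((1 / 2) ^ (n + 2))) hT ?_ ?_
      · have := hKadd _ hpos _ hpos
        rw [e1] at this ⊢
        exact this.trans ih
      · have := hKadd _ hpos2 _ hpos2
        rw [e2] at this
        exact this.symm
  have hdy2 : ∀ m n : ℕ, Eqv T (K (((m : ℝ) + 1) * (1 / 2) ^ n))
      (fun x => x ^ (-(((m : ℝ) + 1) * (1 / 2 : ℝ) ^ n))) := by
    intro m n
    induction m with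
    | zero => simpa using hdy n
    | succ m ih =>
      have hpos : (0:ℝ) < (1 / 2) ^ n := by positivity
      have hpos2 : (0:ℝ) < ((m : ℝ) + 1) * (1 / 2) ^ n := by positivity
      have h1 := hKadd _ hpos2 _ hpos
      have h2 := Eqv.mul ih (hdy n) (sube_rpow _) (hKs _ hpos)
      have e : ((m : ℝ) + 1) * (1 / 2) ^ n + (1 / 2) ^ n = (((m + 1 : ℕ) : ℝ) + 1) * (1 / 2) ^ n := by
        push_cast
        ring
      rw [e] at h1
      refine h1.symm.trans (h2.trans (Eqv.of_eventuallyEq ?_))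
      filter_upwards [eventually_gt_atTop 0] with x hx
      rw [← Real.rpow_add hx, ← e]
      congr 1
      ring
  -- values on constants
  set c : ℝ := 1 / T with hc
  have hJc : ∀ α > 0, ∀ᵐ t ∂(volume.restrict (Icc a b)),
      J α (fun _ => c) t = c * J α (fun _ => 1) t := by
    intro α hα
    filter_upwards [hkE α hα _ (hconst c), hkE α hα _ (hconst 1)] with t h1 h2
    rw [h1, h2, convOp, convOp, ← intervalIntegral.integral_const_mul]
    refine intervalIntegral.integral_congr fun s _ => ?_
    beta_reduce
    ring
  have hdval : ∀ m n : ℕ, ∀ᵐ t ∂(volume.restrict (Icc a b)),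
      J (((m : ℝ) + 1) * (1 / 2) ^ n) (fun _ => c) t =
        c * hk (((m : ℝ) + 1) * (1 / 2) ^ n + 1) (t - a) := by
    intro m n
    have hpos2 : (0:ℝ) < ((m : ℝ) + 1) * (1 / 2) ^ n := by positivity
    have h1 := hKΦ' _ hpos2 (hdy2 m n)
    have h2 := ae_eq_of_LTr (hΦI _ hpos2) (hk_integrableOn (by linarith) T)
      (h1.trans (LTr_hk (by linarith) hT).symm)
    have h3 : ∀ᵐ t ∂(volume.restrict (Icc a b)),
        J (((m : ℝ) + 1) * (1 / 2) ^ n) (fun _ => 1) t =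
          hk (((m : ℝ) + 1) * (1 / 2) ^ n + 1) (t - a) := by
      rw [shift_ae]
      filter_upwards [h2] with u hu
      rw [hu, add_sub_cancel_right]
    filter_upwards [h3, hJc _ hpos2] with t h4 h5
    rw [h5, h4]
  have hcn : ∫ t in Icc a b, |(fun _ : ℝ => c) t| ≤ 1 := by
    have : 0 < c := by positivity
    simp only [abs_of_pos this, integral_const, smul_eq_mul]
    rw [measureReal_restrict_apply_univ, Real.volume_real_Icc_of_le hab.le, hc, ← hTdef]
    rw [mul_one_div, div_self hT.ne']
  have hval : ∀ α > 0, ∀ᵐ t ∂(volume.restrict (Icc a b)),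
      J α (fun _ => c) t = c * hk (α + 1) (t - a) := by
    intro α hα
    have hhkI : ∀ β > 0, IntegrableOn (fun t => c * hk (β + 1) (t - a)) (Icc a b) := by
      intro β hβ
      have := hk_cont hβ
      exact Continuous.integrableOn_Icc (by fun_prop)
    have hJI := hmap α hα _ (hconst c)
    set A := ∫ t in Icc a b, |J α (fun _ => c) t - c * hk (α + 1) (t - a)| with hA
    have hA0 : A ≤ 0 := by
      refine le_of_forall_pos_le_add fun ε hε => ?_
      obtain ⟨δ, hδ, h1⟩ := hcont α hα (ε / 2) (by positivity)
      obtain ⟨δ', hδ', h2⟩ := hk_family_cont a b c α hα (ε / 2) (by positivity)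
      obtain ⟨m, n, hmn⟩ := dyadic_dense hα (lt_min hδ hδ')
      have hpos2 : (0:ℝ) < ((m : ℝ) + 1) * (1 / 2) ^ n := by positivity
      set d := ((m : ℝ) + 1) * (1 / 2) ^ n with hd
      have h3 := h1 d hpos2 (hmn.trans_le (min_le_left _ _)) _ (hconst c) hcn
      have h4 := h2 d hpos2 (hmn.trans_le (min_le_right _ _))
      have hJd := hmap d hpos2 _ (hconst c)
      have h5 : A ≤ (∫ t in Icc a b, |J d (fun _ => c) t - J α (fun _ => c) t|) +
          ∫ t in Icc a b, |c * hk (d + 1) (t - a) - c * hk (α + 1) (t - a)| := by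
        rw [hA, ← integral_add (abs_sub_int hJd hJI) (abs_sub_int (hhkI d hpos2) (hhkI α hα))]
        refine integral_mono_ae (abs_sub_int hJI (hhkI α hα))
          ((abs_sub_int hJd hJI).add (abs_sub_int (hhkI d hpos2) (hhkI α hα))) ?_
        filter_upwards [hdval m n] with t ht
        rw [← hd] at ht
        rw [← ht, abs_sub_comm (J d (fun _ => c) t) (J α (fun _ => c) t)]
        exact abs_sub_le _ _ _
      linarith
    have hA1 : A = 0 := le_antisymm hA0 (integral_nonneg fun t => abs_nonneg _)
    rw [hA, integral_eq_zero_iff_of_nonneg (fun t => abs_nonneg _) (abs_sub_int hJI (hhkI α hα))] at hA1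
    filter_upwards [hA1] with t ht
    have ht : |J α (fun _ => c) t - c * hk (α + 1) (t - a)| = 0 := ht
    linarith [abs_eq_zero.1 ht]
  intro α hα f hf
  have hker : ∀ᵐ u ∂(volume.restrict (Ioc 0 T)), k α (u + a) = hk α u := by
    refine ae_eq_of_LTr (hKI α hα) (hk_integrableOn hα T) ?_
    refine Eqv.trans (hΦK α hα ?_) (LTr_hk hα hT).symm
    have h1 : ∀ᵐ u ∂(volume.restrict (Ioc 0 T)), J α (fun _ => 1) (u + a) = hk (α + 1) u := by
      have h2 : ∀ᵐ t ∂(volume.restrict (Icc a b)), J α (fun _ => 1) t = hk (α + 1) (t - a) := by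
        filter_upwards [hval α hα, hJc α hα] with t h3 h4
        rw [h4] at h3
        have : c ≠ 0 := by positivity
        exact mul_left_cancel₀ this h3
      filter_upwards [(shift_ae a b _).1 h2] with u hu
      rw [hu, add_sub_cancel_right]
    simp only [hΦ]
    rw [LTr_congr h1]
    exact LTr_hk (by linarith) hT
  rw [ae_restrict_iff' measurableSet_Ioc] at hker
  filter_upwards [hkE α hα f hf, ae_restrict_mem measurableSet_Icc] with t ht htm
  rw [ht, convOp, RL]
  refine intervalIntegral.integral_congr_ae ?_
  have h1 := (quasiMeasurePreserving_sub_left (volume : Measure ℝ) t).ae hker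
  have h2 : ∀ᵐ s : ℝ, s ≠ t := by simp [ae_iff]
  filter_upwards [h1, h2] with s h3 h4 hs
  rw [uIoc_of_le htm.1] at hs
  have hlt : s < t := lt_of_le_of_ne hs.2 h4
  rw [h3 ⟨by linarith, by linarith [hs.1, htm.2]⟩, hk]
end
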